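/- arXiv:1508.02014 — 5 statements merged into one kernel-verified Lean document; each statement's English description precedes it below -/
import Mathlib

section
/- (Multidimensional Wiener approximation theorem in L^1.) Let n ≥ 1 and f ∈ L^1(ℝ^n). Then the linear span of the translates { x ↦ f(x − a) : a ∈ ℝ^n } is dense in L^1(ℝ^n) if and only if the Fourier transform ℱf has no zeros on ℝ^n. -/
open MeasureTheory Complex Set

noncomputable section

/-- The Fourier transform `ℱf(ξ) = (2π)^{-n/2} ∫_{ℝ^n} e^{-iξ·x} f(x) dx`. -/
def fourierT (n : ℕ) (f : (Fin n → ℝ) → ℂ) (ξ : Fin n → ℝ) : ℂ :=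
  (((2 * Real.pi) ^ (-(n : ℝ) / 2) : ℝ) : ℂ) *
    ∫ x : Fin n → ℝ, Complex.exp (-I * ∑ i, (ξ i : ℂ) * (x i : ℂ)) * f x

section Helpers

open Filter Topology FourierTransform SchwartzMap
open scoped ENNReal

abbrev WV (n : ℕ) := EuclideanSpace ℝ (Fin n)
abbrev WL (n : ℕ) := Lp ℂ 1 (volume : Measure (WV n))

variable {n : ℕ}

theorem wl_int (u : WL n) : Integrable (u : WV n → ℂ) := L1.integrable_coeFn u

/-- translation -/
def wtau (a : WV n) : WL n →ₗᵢ[ℂ] WL n :=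
  Lp.compMeasurePreservingₗᵢ ℂ (fun x => x - a) (measurePreserving_sub_right volume a)

theorem wtau_ae (a : WV n) (u : WL n) : wtau a u =ᵐ[volume] fun x => u (x - a) :=
  Lp.coeFn_compMeasurePreserving u (measurePreserving_sub_right volume a)

theorem wtau_cont (u : WL n) : Continuous fun a : WV n => wtau a u := by
  let g : C(WV n, C(WV n, WV n)) :=
    (ContinuousMap.mk (fun p : WV n × WV n => p.2 - p.1) (by fun_prop)).curry
  exact (continuous_const (y := u)).compMeasurePreservingLp g.continuous
    (fun a => measurePreserving_sub_right volume a) ENNReal.one_ne_top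

theorem wtau_zero (u : WL n) : wtau 0 u = u := by
  apply Lp.ext
  filter_upwards [wtau_ae 0 u] with x hx
  rw [hx, sub_zero]

theorem wconv_int (h : WV n → ℂ) (hh : Integrable h) (u : WL n) :
    Integrable fun a => h a • wtau a u := by
  refine Integrable.mono' (hh.norm.mul_const ‖u‖) ?_ ?_
  · exact hh.aestronglyMeasurable.smul (wtau_cont u).aestronglyMeasurable
  · refine Filter.Eventually.of_forall fun a => ?_
    rw [norm_smul, LinearIsometry.norm_map]

/-- convolution -/
def wconv (h u : WL n) : WL n := ∫ a, h a • wtau a u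

theorem wconv_norm (h u : WL n) : ‖wconv h u‖ ≤ ‖h‖ * ‖u‖ := by
  calc ‖wconv h u‖ ≤ ∫ a, ‖h a • wtau a u‖ := norm_integral_le_integral_norm _
    _ = ∫ a, ‖h a‖ * ‖u‖ := by simp only [norm_smul, LinearIsometry.norm_map]
    _ = _ := by rw [integral_mul_const, L1.norm_eq_integral_norm h]

theorem wconv_clm (Λ : WL n →L[ℂ] ℂ) (h u : WL n) :
    Λ (wconv h u) = ∫ a, h a * Λ (wtau a u) := by
  rw [wconv, ← ContinuousLinearMap.integral_comp_comm _ (wconv_int h (wl_int h) u)]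
  simp

/-- Fourier transform at a point, as a functional -/
def wF (ξ : WV n) : WL n →L[ℂ] ℂ :=
  (BoundedContinuousFunction.evalCLM ℂ ξ).comp (Real.Lp.fourierTransformCLM (WV n) ℂ)

theorem wF_apply (ξ : WV n) (u : WL n) : wF ξ u = 𝓕 (u : WV n → ℂ) ξ := rfl

theorem wF_tau (ξ a : WV n) (u : WL n) :
    wF ξ (wtau a u) = Complex.exp (((-2 * Real.pi * inner ℝ a ξ : ℝ) : ℂ) * I) * wF ξ u := by
  rw [wF_apply, wF_apply, Real.fourier_congr_ae (wtau_ae a u), Real.fourier_eq', Real.fourier_eq',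
    ← integral_const_mul, ← integral_add_right_eq_self _ a]
  congr 1; ext x
  simp only [add_sub_cancel_right, smul_eq_mul, ← mul_assoc]
  rw [← Complex.exp_add, inner_add_left]
  congr 2
  push_cast
  ring

theorem wF_conv (ξ : WV n) (h u : WL n) : wF ξ (wconv h u) = wF ξ h * wF ξ u := by
  rw [wconv_clm]
  simp only [wF_tau]
  rw [wF_apply ξ h, Real.fourier_eq', ← integral_mul_const]
  congr 1; ext a
  simp only [smul_eq_mul]
  ring_nf

theorem wF_inj (u : WL n) (hu : ∀ ξ, wF ξ u = 0) : u = 0 := by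
  rw [Lp.eq_zero_iff_ae_eq_zero]
  refine ae_eq_zero_of_integral_contDiff_smul_eq_zero (wl_int u).locallyIntegrable ?_
  intro g hg hgs
  let G : 𝓢(WV n, ℂ) := HasCompactSupport.toSchwartzMap (f := fun x => (g x : ℂ))
    (hgs.comp_left (g := fun r : ℝ => (r : ℂ)) (by simp)) (Complex.ofRealCLM.contDiff.comp hg)
  have hG : ∀ x, 𝓕 ((𝓕⁻ G : 𝓢(WV n, ℂ)) : WV n → ℂ) x = (g x : ℂ) := by
    intro x
    rw [← SchwartzMap.fourier_coe, fourier_fourierInv_eq]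
    rfl
  have key := VectorFourier.integral_fourierIntegral_smul_eq_flip (e := Real.fourierChar)
    (L := innerₗ (WV n)) (μ := volume)
    (ν := volume) (f := (𝓕⁻ G : 𝓢(WV n, ℂ))) (g := (u : WV n → ℂ)) Real.continuous_fourierChar
    (by exact continuous_inner) (SchwartzMap.integrable _) (wl_int u)
  rw [flip_innerₗ] at key
  have h1 : ∀ x, VectorFourier.fourierIntegral Real.fourierChar volume (innerₗ (WV n))
    (u : WV n → ℂ) x = 0 := hu
  have h2 : ∀ x, VectorFourier.fourierIntegral Real.fourierChar volume (innerₗ (WV n))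
    ((𝓕⁻ G : 𝓢(WV n, ℂ)) : WV n → ℂ) x = (g x : ℂ) := hG
  simp only [h1, h2, smul_zero, integral_zero] at key
  rw [← key]
  congr 1

theorem wF_ext (u v : WL n) (h : ∀ ξ, wF ξ u = wF ξ v) : u = v := by
  rw [← sub_eq_zero]
  apply wF_inj
  intro ξ
  rw [map_sub, h, sub_self]

theorem exists_psi (n : ℕ) : ∃ w : WL n, (∀ ξ : WV n, ‖ξ‖ ≤ 1 → wF ξ w = 1) ∧
    (∀ ξ : WV n, 2 ≤ ‖ξ‖ → wF ξ w = 0) := by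
  let b : ContDiffBump (0 : WV n) := ⟨1, 2, one_pos, one_lt_two⟩
  let G : 𝓢(WV n, ℂ) := HasCompactSupport.toSchwartzMap (f := fun x => (b x : ℂ))
    (b.hasCompactSupport.comp_left (g := fun r : ℝ => (r : ℂ)) (by simp))
    (Complex.ofRealCLM.contDiff.comp b.contDiff)
  have hF : ∀ ξ, wF ξ ((𝓕⁻ G : 𝓢(WV n, ℂ)).toLp 1 volume) = (b ξ : ℂ) := by
    intro ξ
    rw [wF_apply, Real.fourier_congr_ae (SchwartzMap.coeFn_toLp _ _ _), ← SchwartzMap.fourier_coe,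
      fourier_fourierInv_eq]
    rfl
  refine ⟨(𝓕⁻ G : 𝓢(WV n, ℂ)).toLp 1 volume, fun ξ h => ?_, fun ξ h => ?_⟩
  · rw [hF, b.one_of_mem_closedBall (by simpa using h)]; simp
  · rw [hF, b.zero_of_le_dist (by simpa using h)]; simp

/-- modulated dilation, as a function -/
def wPf (w : WL n) (ε : ℝ) (ξ₀ : WV n) (x : WV n) : ℂ :=
  ((ε ^ n : ℝ) : ℂ) * (Complex.exp (((2 * Real.pi * inner ℝ x ξ₀ : ℝ) : ℂ) * I) * w (ε • x))

theorem norm_exp_real_I (t : ℝ) : ‖Complex.exp ((t : ℂ) * I)‖ = 1 := Complex.norm_exp_ofReal_mul_I t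

theorem wPf_int (w : WL n) {ε : ℝ} (hε : 0 < ε) (ξ₀ : WV n) : Integrable (wPf w ε ξ₀) := by
  refine Integrable.const_mul ?_ _
  have h := (wl_int w).comp_smul hε.ne'
  refine h.bdd_mul (c := 1) ?_ ?_
  · exact Continuous.aestronglyMeasurable (by fun_prop)
  · exact Filter.Eventually.of_forall fun x => (norm_exp_real_I _).le

/-- modulated dilation -/
def wP (w : WL n) {ε : ℝ} (hε : 0 < ε) (ξ₀ : WV n) : WL n := (wPf_int w hε ξ₀).toL1 _

theorem wP_ae (w : WL n) {ε : ℝ} (hε : 0 < ε) (ξ₀ : WV n) :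
    wP w hε ξ₀ =ᵐ[volume] wPf w ε ξ₀ := Integrable.coeFn_toL1 _

theorem scale_integral {F : Type*} [NormedAddCommGroup F] [NormedSpace ℝ F] (G : WV n → F)
    {ε : ℝ} (hε : 0 < ε) : ∫ x, ε ^ n • G (ε • x) = ∫ y, G y := by
  rw [integral_smul, Measure.integral_comp_smul_of_nonneg volume G ε (hR := hε.le), smul_smul]
  simp [hε.ne']

theorem wP_F (w : WL n) {ε : ℝ} (hε : 0 < ε) (ξ₀ ξ : WV n) :
    wF ξ (wP w hε ξ₀) = wF (ε⁻¹ • (ξ - ξ₀)) w := by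
  rw [wF_apply, wF_apply, Real.fourier_congr_ae (wP_ae w hε ξ₀), Real.fourier_eq', Real.fourier_eq']
  refine Eq.trans ?_ (scale_integral _ hε)
  congr 1; ext x
  rw [real_inner_smul_left, real_inner_smul_right, mul_inv_cancel_left₀ hε.ne', inner_sub_right]
  simp only [wPf, smul_eq_mul, Complex.real_smul]
  have : (((-2 * Real.pi * (inner ℝ x ξ - inner ℝ x ξ₀) : ℝ) : ℂ) * I) =
    ((-2 * Real.pi * inner ℝ x ξ : ℝ) : ℂ) * I + ((2 * Real.pi * inner ℝ x ξ₀ : ℝ) : ℂ) * I := by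
    push_cast; ring
  rw [this, Complex.exp_add]
  ring

theorem wP_tau (w : WL n) {ε : ℝ} (hε : 0 < ε) (ξ₀ a : WV n) :
    ‖wtau a (wP w hε ξ₀) -
      Complex.exp (((-2 * Real.pi * inner ℝ a ξ₀ : ℝ) : ℂ) * I) • wP w hε ξ₀‖
      = ‖wtau (ε • a) w - w‖ := by
  rw [L1.norm_eq_integral_norm, L1.norm_eq_integral_norm]
  have h1 : (fun y => ‖(wtau (ε • a) w - w : WL n) y‖) =ᵐ[volume]
      fun y => ‖w (y - ε • a) - w y‖ := by
    filter_upwards [Lp.coeFn_sub (wtau (ε • a) w) w, wtau_ae (ε • a) w] with y h1 h2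
    rw [h1, Pi.sub_apply, h2]
  rw [integral_congr_ae h1]
  refine Eq.trans ?_ (scale_integral _ hε)
  apply integral_congr_ae
  filter_upwards [Lp.coeFn_sub (wtau a (wP w hε ξ₀))
      (Complex.exp (((-2 * Real.pi * inner ℝ a ξ₀ : ℝ) : ℂ) * I) • wP w hε ξ₀),
    Lp.coeFn_smul (Complex.exp (((-2 * Real.pi * inner ℝ a ξ₀ : ℝ) : ℂ) * I)) (wP w hε ξ₀),
    wtau_ae a (wP w hε ξ₀), wP_ae w hε ξ₀,
    (measurePreserving_sub_right volume a).quasiMeasurePreserving.ae (wP_ae w hε ξ₀)]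
    with x h1 h2 h3 h4 h5
  rw [h1, Pi.sub_apply, h2, Pi.smul_apply, h3, h5, h4]
  have e : ((2 * Real.pi * inner ℝ (x - a) ξ₀ : ℝ) : ℂ) * I =
    ((-2 * Real.pi * inner ℝ a ξ₀ : ℝ) : ℂ) * I + ((2 * Real.pi * inner ℝ x ξ₀ : ℝ) : ℂ) * I := by
    rw [inner_sub_left]
    push_cast; ring
  simp only [wPf]
  rw [e, Complex.exp_add, smul_sub, smul_eq_mul]
  have : ∀ A B C X Y : ℂ, A * (B * C * X) - B * (A * (C * Y)) = A * (B * (C * (X - Y))) := by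
    intros; ring
  rw [this, norm_mul, norm_mul, norm_mul, norm_exp_real_I, norm_exp_real_I, one_mul, one_mul,
    Complex.norm_real, Real.norm_of_nonneg (by positivity), smul_eq_mul]

/-- modulus -/
def wD (h u : WL n) (ε : ℝ) : ℝ := ∫ a, ‖h a‖ * ‖wtau (ε • a) u - u‖

theorem wD_tendsto (h u : WL n) : Tendsto (wD h u) (𝓝 0) (𝓝 0) := by
  have : (0 : ℝ) = ∫ a : WV n, ‖h a‖ * ‖wtau ((0:ℝ) • a) u - u‖ := by
    simp [wtau_zero]
  rw [this]
  have hc : ∀ a : WV n, Continuous fun ε : ℝ => ‖wtau (ε • a) u - u‖ := by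
    intro a
    exact (((wtau_cont u).comp (by fun_prop : Continuous fun ε : ℝ => ε • a)).sub
      continuous_const).norm
  rw [← this]
  nth_rewrite 2 [this]
  refine tendsto_integral_filter_of_dominated_convergence (fun a => ‖h a‖ * (‖u‖ + ‖u‖)) ?_ ?_ ?_ ?_
  · refine Filter.Eventually.of_forall fun ε => ?_
    refine (wl_int h).norm.aestronglyMeasurable.mul ?_
    exact (((wtau_cont u).comp (by fun_prop : Continuous fun a : WV n => ε • a)).sub
      continuous_const).norm.aestronglyMeasurable
  · refine Filter.Eventually.of_forall fun ε => Filter.Eventually.of_forall fun a => ?_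
    rw [Real.norm_of_nonneg (by positivity)]
    gcongr
    refine (norm_sub_le _ _).trans ?_
    rw [LinearIsometry.norm_map]
  · exact (wl_int h).norm.mul_const _
  · refine Filter.Eventually.of_forall fun a => ?_
    exact (((hc a).tendsto 0).const_mul _)

theorem wconv_approx (f w : WL n) {ε : ℝ} (hε : 0 < ε) (ξ₀ : WV n) :
    ‖wconv f (wP w hε ξ₀) - wF ξ₀ f • wP w hε ξ₀‖ ≤ wD f w ε := by
  have hi : Integrable fun a : WV n =>
      (Complex.exp (((-2 * Real.pi * inner ℝ a ξ₀ : ℝ) : ℂ) * I) * f a) := by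
    refine (wl_int f).bdd_mul (c := 1) ?_ ?_
    · exact Continuous.aestronglyMeasurable (by fun_prop)
    · exact Filter.Eventually.of_forall fun x => (norm_exp_real_I _).le
  rw [wF_apply, Real.fourier_eq']
  simp only [smul_eq_mul]
  rw [← integral_smul_const, wconv, ← integral_sub (wconv_int f (wl_int f) _) (hi.smul_const _)]
  refine (norm_integral_le_integral_norm _).trans (le_of_eq ?_)
  rw [wD]
  congr 1; ext a
  rw [← wP_tau w hε ξ₀ a, ← norm_smul, smul_sub, smul_smul, mul_comm (f a)]

theorem wconv_approx_id (w u : WL n) {ε : ℝ} (hε : 0 < ε) :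
    ‖wconv (wP w hε 0) u - wF 0 w • u‖ ≤ wD w u ε⁻¹ := by
  have h1 : wconv (wP w hε 0) u = ∫ b, w b • wtau (ε⁻¹ • b) u := by
    rw [wconv]
    refine Eq.trans ?_ (scale_integral _ hε)
    apply integral_congr_ae
    filter_upwards [wP_ae w hε 0] with a ha
    rw [ha, inv_smul_smul₀ hε.ne']
    simp only [wPf, inner_zero_right, mul_zero, Complex.ofReal_zero, zero_mul, Complex.exp_zero,
      one_mul, mul_smul]
    exact (Complex.coe_smul _ _)
  have hi : Integrable fun b : WV n => w b • wtau (ε⁻¹ • b) u := by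
    refine Integrable.mono' ((wl_int w).norm.mul_const ‖u‖) ?_ ?_
    · exact (wl_int w).aestronglyMeasurable.smul ((wtau_cont u).comp
        (by fun_prop : Continuous fun b : WV n => ε⁻¹ • b)).aestronglyMeasurable
    · refine Filter.Eventually.of_forall fun a => ?_
      rw [norm_smul, LinearIsometry.norm_map]
  have h2 : wF 0 w = ∫ b, w b := by
    rw [wF_apply, Real.fourier_eq']
    simp
  rw [h1, h2, ← integral_smul_const, ← integral_sub hi ((wl_int w).smul_const _)]
  refine (norm_integral_le_integral_norm _).trans (le_of_eq ?_)
  rw [wD]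
  congr 1; ext a
  rw [← norm_smul, smul_sub]

theorem w_local (f : WL n) (Λ : WL n →L[ℂ] ℂ) (hΛ : ∀ a, Λ (wtau a f) = 0) (ξ₀ : WV n)
    (hc : wF ξ₀ f ≠ 0) :
    ∃ r : ℝ, 0 < r ∧ ∀ u : WL n, (∀ ξ, r ≤ ‖ξ - ξ₀‖ → wF ξ u = 0) → Λ u = 0 := by
  obtain ⟨w, hw1, -⟩ := exists_psi n
  have hpos : 0 < ‖wF ξ₀ f‖ / 2 := by positivity
  have hev := ((wD_tendsto f w).eventually (gt_mem_nhds hpos))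
  obtain ⟨ε, hεD, hε⟩ := ((hev.filter_mono nhdsWithin_le_nhds).and
    (self_mem_nhdsWithin (s := Ioi (0:ℝ)))).exists
  replace hε : 0 < ε := hε
  set c := wF ξ₀ f with hcdef
  set P := wP w hε ξ₀ with hP
  let k : WL n := P - c⁻¹ • wconv f P
  have hk : ‖k‖ ≤ 1 / 2 := by
    have e : k = (-c⁻¹) • (wconv f P - c • P) := by
      simp only [k, smul_sub, smul_smul, neg_mul, inv_mul_cancel₀ hc, neg_smul, one_smul]
      abel
    rw [e, norm_smul, norm_neg, norm_inv]
    have h1 : ‖wconv f P - c • P‖ ≤ ‖c‖ / 2 := (wconv_approx f w hε ξ₀).trans hεD.le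
    calc ‖c‖⁻¹ * ‖wconv f P - c • P‖ ≤ ‖c‖⁻¹ * (‖c‖ / 2) := by gcongr
      _ = 1 / 2 := by
        have : ‖c‖ ≠ 0 := norm_ne_zero_iff.2 hc
        field_simp
  refine ⟨ε, hε, ?_⟩
  have hPF : ∀ ξ, ‖ξ - ξ₀‖ ≤ ε → wF ξ P = 1 := by
    intro ξ h
    rw [hP, wP_F]
    apply hw1
    rw [norm_smul, norm_inv, Real.norm_of_nonneg hε.le, inv_mul_le_iff₀ hε, mul_one]
    exact h
  have key : ∀ m : ℕ, ∀ u : WL n, (∀ ξ, ε ≤ ‖ξ - ξ₀‖ → wF ξ u = 0) →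
      ‖Λ u‖ ≤ ‖Λ‖ * ‖u‖ * (1 / 2) ^ m := by
    intro m
    induction m with
    | zero => intro u _; simpa using Λ.le_opNorm u
    | succ m ih =>
      intro u hu
      have hku : wconv k u = u - c⁻¹ • wconv u f := by
        apply wF_ext
        intro ξ
        rcases le_total ε ‖ξ - ξ₀‖ with h | h
        · simp [wF_conv, hu ξ h]
        · simp only [k, wF_conv, map_sub, map_smul, hPF ξ h, smul_eq_mul]
          ring
      have hΛu : Λ u = Λ (wconv k u) := by
        rw [hku, map_sub, map_smul, wconv_clm]
        simp [hΛ]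
      rw [hΛu]
      refine (ih _ fun ξ h => ?_).trans ?_
      · rw [wF_conv, hu ξ h, mul_zero]
      · have : ‖wconv k u‖ ≤ 1 / 2 * ‖u‖ := (wconv_norm k u).trans (by gcongr)
        calc ‖Λ‖ * ‖wconv k u‖ * (1 / 2) ^ m ≤ ‖Λ‖ * (1 / 2 * ‖u‖) * (1 / 2) ^ m := by gcongr
          _ = _ := by ring
  intro u hu
  have ht : Tendsto (fun m : ℕ => ‖Λ‖ * ‖u‖ * (1 / 2 : ℝ) ^ m) atTop (𝓝 0) := by
    simpa using (tendsto_pow_atTop_nhds_zero_of_lt_one (by norm_num : (0:ℝ) ≤ 1 / 2)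
      (by norm_num)).const_mul (‖Λ‖ * ‖u‖)
  have : ‖Λ u‖ ≤ 0 := ge_of_tendsto' ht fun m => key m u hu
  simpa using this

theorem w_global (f : WL n) (Λ : WL n →L[ℂ] ℂ) (hΛ : ∀ a, Λ (wtau a f) = 0)
    (hc : ∀ ξ, wF ξ f ≠ 0) (u : WL n) : Λ u = 0 := by
  choose r hr hloc using fun ξ => w_local f Λ hΛ ξ (hc ξ)
  obtain ⟨w, hw1, hw2⟩ := exists_psi n
  have hr2 : ∀ x, 0 < r x / 2 := fun x => half_pos (hr x)
  have cover : ∀ t : Finset (WV n), ∀ u : WL n,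
      (∀ ξ, (∀ x ∈ t, ξ ∉ Metric.ball x (r x / 2)) → wF ξ u = 0) → Λ u = 0 := by
    classical
    intro t
    induction t using Finset.induction_on with
    | empty =>
      intro u hu
      rw [wF_inj u fun ξ => hu ξ (by simp), map_zero]
    | insert x t _ ih =>
      intro u hu
      have h1 : Λ (wconv (wP w (hr2 x) x) u) = 0 := by
        apply hloc x
        intro ξ h
        rw [wF_conv, wP_F, hw2, zero_mul]
        rw [norm_smul, norm_inv, Real.norm_of_nonneg (hr2 x).le, le_inv_mul_iff₀ (hr2 x)]
        linarith
      have h2 : Λ (u - wconv (wP w (hr2 x) x) u) = 0 := by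
        apply ih
        intro ξ h
        rw [map_sub, wF_conv]
        by_cases hx : ξ ∈ Metric.ball x (r x / 2)
        · rw [wP_F, hw1, one_mul, sub_self]
          rw [norm_smul, norm_inv, Real.norm_of_nonneg (hr2 x).le, inv_mul_le_iff₀ (hr2 x), mul_one]
          rw [mem_ball_iff_norm] at hx
          exact hx.le
        · rw [hu ξ, mul_zero, sub_zero]
          intro y hy
          rcases Finset.mem_insert.1 hy with rfl | hy
          · exact hx
          · exact h y hy
      rw [map_sub, h1, sub_zero] at h2
      exact h2
  have cpt : ∀ R : ℝ, ∀ u : WL n, (∀ ξ, R ≤ ‖ξ‖ → wF ξ u = 0) → Λ u = 0 := by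
    intro R u hu
    obtain ⟨t, -, ht⟩ := (isCompact_closedBall (0 : WV n) R).elim_nhds_subcover
      (fun x => Metric.ball x (r x / 2)) (fun x _ => Metric.ball_mem_nhds x (hr2 x))
    apply cover t
    intro ξ h
    apply hu
    by_contra hlt
    have := ht (by simpa using (not_le.1 hlt).le : ξ ∈ Metric.closedBall (0 : WV n) R)
    simp only [mem_iUnion] at this
    obtain ⟨x, hx, hx'⟩ := this
    exact h x hx hx'
  have hk : ∀ k : ℕ, (0 : ℝ) < k + 1 := fun k => by positivity
  have hlim : Tendsto (fun k : ℕ => wconv (wP w (hk k) 0) u) atTop (𝓝 u) := by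
    rw [tendsto_iff_norm_sub_tendsto_zero]
    refine squeeze_zero (fun _ => norm_nonneg _) (fun k => ?_)
      ((wD_tendsto w u).comp (tendsto_inv_atTop_zero.comp
        (tendsto_atTop_add_const_right _ (1:ℝ) tendsto_natCast_atTop_atTop)))
    have := wconv_approx_id w u (hk k)
    rw [hw1 0 (by simp), one_smul] at this
    exact this
  have hz : ∀ k : ℕ, Λ (wconv (wP w (hk k) 0) u) = 0 := by
    intro k
    apply cpt (2 * (k + 1))
    intro ξ h
    rw [wF_conv, wP_F, hw2, zero_mul]
    rw [sub_zero, norm_smul, norm_inv, Real.norm_of_nonneg (hk k).le, le_inv_mul_iff₀ (hk k)]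
    linarith
  have := (Λ.continuous.tendsto u).comp hlim
  refine tendsto_nhds_unique this ?_
  simp only [Function.comp_def, hz]
  exact tendsto_const_nhds

theorem w_dense (f : WL n) (hc : ∀ ξ, wF ξ f ≠ 0) (g : WL n) (ε : ℝ) (hε : 0 < ε) :
    ∃ (N : ℕ) (b : Fin N → ℂ) (a : Fin N → WV n), ‖g - ∑ j, b j • wtau (a j) f‖ < ε := by
  let S : Submodule ℂ (WL n) := (Submodule.span ℂ (range fun a => wtau a f)).topologicalClosure
  have hg : g ∈ S := by
    by_contra hg
    have : IsClosed (S : Set (WL n)) := Submodule.isClosed_topologicalClosure _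
    have hne : S.mkQ g ≠ 0 := by simpa using hg
    obtain ⟨φ, -, hφ⟩ := exists_dual_vector ℂ (S.mkQ g) (norm_ne_zero_iff.2 hne)
    let Λ : WL n →L[ℂ] ℂ := φ.comp S.mkQL
    have hz : Λ g = 0 := by
      refine w_global f Λ (fun a => ?_) hc g
      have : S.mkQL (wtau a f) = 0 := by
        have : wtau a f ∈ S := Submodule.le_topologicalClosure _ (Submodule.subset_span ⟨a, rfl⟩)
        simpa using this
      simp [Λ, this]
    have : φ (S.mkQ g) = 0 := hz
    rw [this] at hφ
    exact hne (by simpa using hφ.symm)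
  obtain ⟨v, hv, hgv⟩ := Metric.mem_closure_iff.1 (show g ∈ closure _ from hg) ε hε
  obtain ⟨N, b, x, rfl⟩ := (Submodule.mem_span_set').1 hv
  choose a ha using fun i => (x i).2
  refine ⟨N, b, a, ?_⟩
  rw [dist_eq_norm] at hgv
  simpa only [ha] using hgv

theorem wemb_int {f : (Fin n → ℝ) → ℝ} (hf : Integrable f) :
    Integrable (fun x : WV n => ((f (WithLp.ofLp x) : ℝ) : ℂ)) :=
  ((PiLp.volume_preserving_ofLp (Fin n)).integrable_comp_of_integrable hf).ofReal

/-- embedding of real integrable functions -/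
def wemb {f : (Fin n → ℝ) → ℝ} (hf : Integrable f) : WL n := (wemb_int hf).toL1 _

theorem wemb_ae {f : (Fin n → ℝ) → ℝ} (hf : Integrable f) :
    wemb hf =ᵐ[volume] fun x : WV n => ((f (WithLp.ofLp x) : ℝ) : ℂ) := Integrable.coeFn_toL1 _

theorem wtransfer {F : Type*} [NormedAddCommGroup F] [NormedSpace ℝ F] (h : (Fin n → ℝ) → F) :
    ∫ x : WV n, h (WithLp.ofLp x) = ∫ x, h x :=
  (PiLp.volume_preserving_ofLp (Fin n)).integral_comp
    (MeasurableEquiv.toLp 2 (Fin n → ℝ)).symm.measurableEmbedding h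

theorem wbridge {f g : (Fin n → ℝ) → ℝ} (hf : Integrable f) (hg : Integrable g) {N : ℕ}
    (b : Fin N → ℂ) (a : Fin N → WV n) :
    ‖wemb hg - ∑ j, b j • wtau (a j) (wemb hf)‖ =
      ∫ x, ‖(g x : ℂ) - ∑ j, b j * (f (x - WithLp.ofLp (a j)) : ℂ)‖ := by
  rw [L1.norm_eq_integral_norm, ← wtransfer]
  apply integral_congr_ae
  have h1 : ∀ᵐ x : WV n, ∀ j, (b j • wtau (a j) (wemb hf) : WL n) x =
      b j * (f (WithLp.ofLp x - WithLp.ofLp (a j)) : ℂ) := by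
    rw [ae_all_iff]
    intro j
    filter_upwards [Lp.coeFn_smul (b j) (wtau (a j) (wemb hf)), wtau_ae (a j) (wemb hf),
      (measurePreserving_sub_right volume (a j)).quasiMeasurePreserving.ae (wemb_ae hf)]
      with x h1 h2 h3
    rw [h1, Pi.smul_apply, h2, h3, smul_eq_mul, WithLp.ofLp_sub]
  filter_upwards [h1, Lp.coeFn_sub (wemb hg) (∑ j, b j • wtau (a j) (wemb hf)), wemb_ae hg,
    Lp.coeFn_fun_finsetSum Finset.univ fun j => b j • wtau (a j) (wemb hf)] with x h1 h2 h3 h4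
  rw [h2, Pi.sub_apply, h3, h4]
  simp only [h1]

theorem wfourier {f : (Fin n → ℝ) → ℝ} (hf : Integrable f) (ξ : Fin n → ℝ) :
    fourierT n (fun x => (f x : ℂ)) ξ = (((2 * Real.pi) ^ (-(n : ℝ) / 2) : ℝ) : ℂ) *
      wF ((2 * Real.pi)⁻¹ • WithLp.toLp 2 ξ) (wemb hf) := by
  rw [fourierT, wF_apply, Real.fourier_congr_ae (wemb_ae hf), Real.fourier_eq', ← wtransfer]
  congr 2; ext x
  rw [smul_eq_mul]
  congr 2
  rw [real_inner_smul_right, PiLp.inner_apply]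
  have : -2 * Real.pi * ((2 * Real.pi)⁻¹ * ∑ i, inner ℝ (x.ofLp i) (ξ i)) =
    - ∑ i, inner ℝ (x.ofLp i) (ξ i) := by
    field_simp
  simp only [this]
  push_cast
  simp only [neg_mul, mul_comm I]
  congr 2
  apply Finset.sum_congr rfl
  intro i _
  simp

theorem wfourier_ne {f : (Fin n → ℝ) → ℝ} (hf : Integrable f) :
    (∀ ξ, fourierT n (fun x => (f x : ℂ)) ξ ≠ 0) ↔ ∀ ξ : WV n, wF ξ (wemb hf) ≠ 0 := by
  have hK : (((2 * Real.pi) ^ (-(n : ℝ) / 2) : ℝ) : ℂ) ≠ 0 := by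
    have : (0 : ℝ) < (2 * Real.pi) ^ (-(n : ℝ) / 2) := by positivity
    exact_mod_cast this.ne'
  constructor
  · intro h ξ h0
    apply h (WithLp.ofLp ((2 * Real.pi) • ξ))
    rw [wfourier hf]
    have : (2 * Real.pi)⁻¹ • WithLp.toLp 2 (WithLp.ofLp ((2 * Real.pi) • ξ)) = ξ := by
      rw [WithLp.toLp_ofLp, inv_smul_smul₀ (by positivity)]
    rw [this, h0, mul_zero]
  · intro h ξ
    rw [wfourier hf]
    exact mul_ne_zero hK (h _)

theorem wreal_exists (ξ : WV n) : ∃ (g : (Fin n → ℝ) → ℝ) (hg : Integrable g),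
    wF ξ (wemb hg) ≠ 0 := by
  by_contra! hcon
  obtain ⟨w, hw, -⟩ := exists_psi n
  obtain ⟨v, h1⟩ : ∃ v : WL n, wF ξ v = 1 := by
    refine ⟨wP w (zero_lt_one (α := ℝ)) ξ, ?_⟩
    rw [wP_F, hw]
    simp
  have hv : Integrable (fun x : Fin n → ℝ => v (WithLp.toLp 2 x)) :=
    (PiLp.volume_preserving_toLp (Fin n)).integrable_comp_of_integrable (wl_int v)
  have hre : Integrable (fun x : Fin n → ℝ => (v (WithLp.toLp 2 x)).re) := hv.re
  have him : Integrable (fun x : Fin n → ℝ => (v (WithLp.toLp 2 x)).im) := hv.im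
  have e : v = wemb hre + I • wemb him := by
    apply Lp.ext
    filter_upwards [Lp.coeFn_add (wemb hre) (I • wemb him), Lp.coeFn_smul I (wemb him),
      wemb_ae hre, wemb_ae him] with x h1 h2 h3 h4
    rw [h1, Pi.add_apply, h2, Pi.smul_apply, h3, h4]
    simp only [WithLp.toLp_ofLp, smul_eq_mul]
    rw [mul_comm]
    exact (Complex.re_add_im _).symm
  rw [e, map_add, map_smul, hcon, hcon] at h1
  simp at h1

end Helpers

/-- Multidimensional Wiener approximation theorem in `L¹`: for `f ∈ L¹(ℝ^n)`, the
linear span of the translates `x ↦ f(x - a)`, `a ∈ ℝ^n`, is dense in `L¹(ℝ^n)` iff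
the Fourier transform `ℱf` has no zeros on `ℝ^n`. -/
theorem wiener_L1
    (n : ℕ) (hn : 1 ≤ n) (f : (Fin n → ℝ) → ℝ) (hf : Integrable f) :
    (∀ g : (Fin n → ℝ) → ℝ, Integrable g → ∀ ε : ℝ, 0 < ε →
        ∃ (N : ℕ) (b : Fin N → ℝ) (a : Fin N → (Fin n → ℝ)),
          ∫ x : Fin n → ℝ, |g x - ∑ j, b j * f (x - a j)| < ε) ↔
      ∀ ξ : Fin n → ℝ, fourierT n (fun x => (f x : ℂ)) ξ ≠ 0 := by
  rw [wfourier_ne hf]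
  constructor
  · intro h ξ h0
    obtain ⟨g, hg, hgξ⟩ := wreal_exists ξ
    have hpos : 0 < ‖wF ξ (wemb hg)‖ := norm_pos_iff.2 hgξ
    obtain ⟨N, b, a, hlt⟩ := h g hg (‖wF ξ (wemb hg)‖ / (‖wF (n := n) ξ‖ + 1)) (by positivity)
    have hb := wbridge hf hg (fun j => (b j : ℂ)) (fun j => WithLp.toLp 2 (a j))
    have hb2 : ∫ x, ‖(g x : ℂ) - ∑ j, (b j : ℂ) * (f (x - a j) : ℂ)‖ =
        ∫ x, |g x - ∑ j, b j * f (x - a j)| := by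
      congr 1; ext x
      rw [← Real.norm_eq_abs, ← Complex.norm_real]
      push_cast
      rfl
    simp only [hb2] at hb
    rw [← hb] at hlt
    set D := wemb hg - ∑ j, (b j : ℂ) • wtau (WithLp.toLp 2 (a j)) (wemb hf) with hD
    have h1 : wF ξ (wemb hg) = wF ξ D := by
      rw [hD, map_sub, map_sum]
      simp [wF_tau, h0]
    have h2 : ‖wF ξ D‖ ≤ ‖wF (n := n) ξ‖ * ‖D‖ := (wF ξ).le_opNorm D
    rw [lt_div_iff₀ (by positivity), h1] at hlt
    nlinarith [norm_nonneg D]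
  · intro h g hg ε hε
    obtain ⟨N, b, a, hlt⟩ := w_dense (wemb hf) h (wemb hg) ε hε
    refine ⟨N, fun j => (b j).re, fun j => WithLp.ofLp (a j), lt_of_le_of_lt ?_ hlt⟩
    rw [wbridge hf hg b a]
    apply integral_mono_of_nonneg (Filter.Eventually.of_forall fun x => abs_nonneg _)
    · refine Integrable.norm (hg.ofReal.sub (integrable_finsetSum _ fun j _ => ?_))
      exact ((hf.comp_sub_right (WithLp.ofLp (a j))).ofReal).const_mul _
    · refine Filter.Eventually.of_forall fun x => ?_
      have : g x - ∑ j, (b j).re * f (x - WithLp.ofLp (a j)) =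
          ((g x : ℂ) - ∑ j, b j * (f (x - WithLp.ofLp (a j)) : ℂ)).re := by
        simp
      simp only [this]
      exact Complex.abs_re_le_norm _
end
end

section
/- Let n ≥ 1, let f ∈ L^1(ℝ^n, ℂ) be such that its Fourier transform ℱf has no zeros on ℝ^n, and let h ∈ L^1(ℝ^n, ℂ) be such that ℱh has compact support. Then there exists g ∈ L^1(ℝ^n, ℂ) such that f * g = h, where * denotes convolution. -/
open MeasureTheory Complex Set

noncomputable section

open FourierTransform Filter Topology

section aux

variable {V : Type*} [NormedAddCommGroup V] [InnerProductSpace ℝ V] [FiniteDimensional ℝ V]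
  [MeasurableSpace V] [BorelSpace V]

lemma aux_inj {h : V → ℂ} (hh : Integrable h) (h0 : ∀ ξ, 𝓕 h ξ = 0) : h =ᵐ[volume] 0 := by
  refine ae_eq_zero_of_integral_contDiff_smul_eq_zero hh.locallyIntegrable ?_
  intro g hg hgc
  have hgc' : HasCompactSupport (fun x => (g x : ℂ)) := hgc.comp_left (g := fun r : ℝ => (r : ℂ)) (by simp)
  have hg' : ContDiff ℝ (↑(⊤ : ℕ∞)) (fun x => (g x : ℂ)) := Complex.ofRealCLM.contDiff.comp hg
  let G : SchwartzMap V ℂ := hgc'.toSchwartzMap hg'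
  let K : SchwartzMap V ℂ := 𝓕⁻ G
  have hK : ∀ x, 𝓕 (K : V → ℂ) x = g x := by
    intro x
    have : 𝓕 K = G := FourierTransform.fourier_fourierInv_eq G
    have h2 := congrArg (fun F : SchwartzMap V ℂ => F x) this
    exact h2
  have key := VectorFourier.integral_fourierIntegral_smul_eq_flip (μ := (volume : Measure V))
    (ν := (volume : Measure V)) (L := innerₗ V) (f := (K : V → ℂ)) (g := h)
    Real.continuous_fourierChar continuous_inner K.integrable hh
  have e1 : ∀ x, g x • h x = VectorFourier.fourierIntegral Real.fourierChar volume (innerₗ V) (K : V → ℂ) x • h x := by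
    intro x
    have := hK x
    rw [Real.fourier_eq] at this
    simp only [VectorFourier.fourierIntegral, innerₗ_apply_apply]
    rw [this]; simp
  simp_rw [e1]
  rw [key]
  have e2 : ∀ x, VectorFourier.fourierIntegral Real.fourierChar volume (innerₗ V).flip h x = 0 := by
    intro x
    have := h0 x
    rw [Real.fourier_eq] at this
    rw [flip_innerₗ]
    exact this
  simp only [e2, smul_zero, integral_zero]

variable (V) in
abbrev L1V := Lp (α := V) ℂ 1 volume

/-- translation on L1 -/
def tau (y : V) : L1V V →ₗᵢ[ℂ] L1V V :=
  Lp.compMeasurePreservingₗᵢ ℂ (fun x : V => x + -y) (measurePreserving_add_right volume (-y))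

def FT (ξ : V) : L1V V →L[ℂ] ℂ :=
  (BoundedContinuousFunction.evalCLM ℂ ξ).comp (Real.Lp.fourierTransformCLM V ℂ)

lemma FT_apply (ξ : V) (φ : L1V V) : FT ξ φ = 𝓕 (φ : V → ℂ) ξ := rfl

lemma tau_cont (φ : L1V V) : Continuous (fun y : V => tau y φ) := by
  let g : C(V, C(V, V)) := (ContinuousMap.mk (fun a : V × V ↦ a.2 + -a.1) (by fun_prop)).curry
  exact Continuous.compMeasurePreservingLp (f := fun _ : V => φ) continuous_const g.continuous
    (fun y => measurePreserving_add_right volume (-y)) (by simp)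

lemma tau_zero (φ : L1V V) : tau (0 : V) φ = φ := by
  apply Lp.ext
  refine (Lp.coeFn_compMeasurePreserving _ _).trans ?_
  filter_upwards with x
  simp

lemma FT_tau (ξ y : V) (φ : L1V V) :
    FT ξ (tau y φ) = (Real.fourierChar (-inner ℝ y ξ) : ℂ) * FT ξ φ := by
  rw [FT_apply, FT_apply]
  have h1 : (tau y φ : V → ℂ) =ᵐ[volume] (φ : V → ℂ) ∘ (fun v => v + -y) :=
    Lp.coeFn_compMeasurePreserving _ _
  rw [Real.fourier_congr_ae h1]
  have := congrFun (VectorFourier.fourierIntegral_comp_add_right Real.fourierChar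
    (volume : Measure V) (innerₗ V) (φ : V → ℂ) (-y)) ξ
  simpa [Circle.smul_def] using! this

lemma conv_int {c : V → ℂ} (hc : Integrable c) (s : ℝ) (φ : L1V V) :
    Integrable (fun y => c y • tau (s • y) φ) := by
  have hm : AEStronglyMeasurable (fun y => c y • tau (s • y) φ) volume :=
    hc.aestronglyMeasurable.smul
      ((tau_cont φ).comp (continuous_const_smul s)).aestronglyMeasurable
  refine (hc.norm.mul_const ‖φ‖).mono' hm ?_
  filter_upwards with y
  simp [norm_smul]

lemma conv_FT {c : V → ℂ} (hc : Integrable c) (s : ℝ) (φ : L1V V) (ξ : V) :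
    FT ξ (∫ y, c y • tau (s • y) φ) = 𝓕 c (s • ξ) * FT ξ φ := by
  rw [← ContinuousLinearMap.integral_comp_comm _ (conv_int hc s φ), Real.fourier_eq,
    ← integral_mul_const]
  congr 1
  ext y
  rw [map_smul, FT_tau]
  simp only [Circle.smul_def, smul_eq_mul, inner_smul_left, inner_smul_right]
  simp
  ring

lemma conv_norm {c : V → ℂ} (s : ℝ) (φ : L1V V) :
    ‖∫ y, c y • tau (s • y) φ‖ ≤ (∫ y, ‖c y‖) * ‖φ‖ := by
  refine (norm_integral_le_integral_norm _).trans ?_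
  rw [← integral_mul_const]
  simp [norm_smul]

lemma conv_tendsto {c : V → ℂ} (hc : Integrable c) (φ : L1V V) :
    Tendsto (fun s : ℝ => ∫ y, c y • tau (s • y) φ) (𝓝 0) (𝓝 ((∫ y, c y) • φ)) := by
  rw [← integral_smul_const]
  refine tendsto_integral_filter_of_dominated_convergence (fun y => ‖c y‖ * ‖φ‖) ?_ ?_
    (hc.norm.mul_const ‖φ‖) ?_
  · exact Eventually.of_forall fun s => (conv_int hc s φ).aestronglyMeasurable
  · refine Eventually.of_forall fun s => ?_
    filter_upwards with y
    simp [norm_smul]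
  · filter_upwards with y
    have h1 : Continuous (fun s : ℝ => c y • tau (s • y) φ) :=
      Continuous.const_smul
        ((tau_cont φ).comp (g := fun y : V => tau y φ) (f := fun s : ℝ => s • y) (by fun_prop)) (c y)
    have := h1.tendsto 0
    simpa [tau_zero] using this

/-- convolution operator by an L1 element -/
def convOp (u : L1V V) : L1V V →L[ℂ] L1V V :=
  LinearMap.mkContinuous
    { toFun := fun φ => ∫ y, u y • tau ((1 : ℝ) • y) φ
      map_add' := by
        intro a b
        simp only [map_add, smul_add]
        exact integral_add (conv_int (L1.integrable_coeFn u) 1 a)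
          (conv_int (L1.integrable_coeFn u) 1 b)
      map_smul' := by
        intro r a
        simp only [map_smul, RingHom.id_apply]
        rw [← integral_smul]
        simp only [smul_comm r] }
    ‖u‖ (fun φ => by
      rw [L1.norm_eq_integral_norm u]
      exact conv_norm 1 φ)

lemma convOp_norm (u : L1V V) : ‖convOp u‖ ≤ ‖u‖ :=
  LinearMap.mkContinuous_norm_le _ (norm_nonneg _) _

lemma convOp_FT (u g : L1V V) (ξ : V) : FT ξ (convOp u g) = FT ξ u * FT ξ g := by
  have := conv_FT (L1.integrable_coeFn u) 1 g ξ
  rw [one_smul] at this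
  exact this

lemma exists_bump : ∃ φ : L1V V, ∀ᶠ ξ in 𝓝 (0 : V), FT ξ φ = 1 := by
  let b : ContDiffBump (0 : V) := default
  have hgc' : HasCompactSupport (fun x => (b x : ℂ)) :=
    b.hasCompactSupport.comp_left (g := fun r : ℝ => (r : ℂ)) (by simp)
  have hg' : ContDiff ℝ (↑(⊤ : ℕ∞)) (fun x => (b x : ℂ)) :=
    Complex.ofRealCLM.contDiff.comp b.contDiff
  let G : SchwartzMap V ℂ := hgc'.toSchwartzMap hg'
  let K : SchwartzMap V ℂ := 𝓕⁻ G
  refine ⟨(memLp_one_iff_integrable.2 K.integrable).toLp, ?_⟩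
  filter_upwards [b.eventuallyEq_one] with ξ hξ
  rw [FT_apply, Real.fourier_congr_ae (MemLp.coeFn_toLp _)]
  have : 𝓕 K = G := FourierTransform.fourier_fourierInv_eq G
  have h2 := congrArg (fun F : SchwartzMap V ℂ => F ξ) this
  refine Eq.trans h2 ?_
  change (b ξ : ℂ) = 1
  simp [hξ]

lemma solve (a : ℂ) (u φ : L1V V) (hu : ‖u‖ < ‖a‖) : ∃ g : L1V V, a • g + convOp u g = φ := by
  have ha : a ≠ 0 := by
    rintro rfl
    simp at hu
    exact absurd hu (not_lt.2 (norm_nonneg _))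
  let T : L1V V →L[ℂ] L1V V := -(a⁻¹ • convOp u)
  have hT : ‖T‖ < 1 := by
    simp only [T, norm_neg, norm_smul, norm_inv]
    rw [inv_mul_lt_one₀ (norm_pos_iff.2 ha)]
    exact (convOp_norm u).trans_lt hu
  obtain ⟨w, hw⟩ := isUnit_one_sub_of_norm_lt_one hT
  refine ⟨(↑w⁻¹ : L1V V →L[ℂ] L1V V) (a⁻¹ • φ), ?_⟩
  set g := (↑w⁻¹ : L1V V →L[ℂ] L1V V) (a⁻¹ • φ) with hg
  have h1 : (↑w : L1V V →L[ℂ] L1V V) g = a⁻¹ • φ := by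
    rw [hg, ← mul_apply_eq_comp, Units.mul_inv]; rfl
  rw [hw] at h1
  have h2 : g + a⁻¹ • convOp u g = a⁻¹ • φ := by
    rw [← h1]; simp [T]
  have h3 := congrArg (fun z => a • z) h2
  simpa [smul_add, smul_smul, ha] using h3

lemma loc {f : V → ℂ} (hf : Integrable f) (ξ₀ : V) (h0 : 𝓕 f ξ₀ ≠ 0) :
    ∃ g : V → ℂ, Integrable g ∧ ∀ᶠ ξ in 𝓝 ξ₀, 𝓕 f ξ * 𝓕 g ξ = 1 := by
  obtain ⟨φ, hφ⟩ := exists_bump (V := V)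
  let c : V → ℂ := fun y => Real.fourierChar (-inner ℝ y ξ₀) • f y
  have hc : Integrable c := (Real.fourierIntegral_convergent_iff ξ₀).2 hf
  have hci : ∫ y, c y = 𝓕 f ξ₀ := (Real.fourier_eq f ξ₀).symm
  have hcF : ∀ ξ, 𝓕 c ξ = 𝓕 f (ξ₀ + ξ) := by
    intro ξ
    rw [Real.fourier_eq, Real.fourier_eq]
    congr 1
    ext y
    simp only [c]
    rw [smul_smul, ← AddChar.map_add_eq_mul, inner_add_right]
    congr 2
    ring
  set a := 𝓕 f ξ₀ with ha
  have ht := conv_tendsto hc φ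
  rw [hci] at ht
  have hev : ∀ᶠ s : ℝ in 𝓝[>] 0, ‖(∫ y, c y • tau (s • y) φ) - a • φ‖ < ‖a‖ := by
    have h1 := (ht.sub_const (a • φ)).norm
    simp only [sub_self, norm_zero] at h1
    exact (h1.mono_left nhdsWithin_le_nhds).eventually (gt_mem_nhds (norm_pos_iff.2 h0))
  obtain ⟨s, hs, hs0⟩ := (hev.and self_mem_nhdsWithin).exists
  have hs0 : 0 < s := hs0
  obtain ⟨g, hg⟩ := solve a _ φ hs
  have hgF : ∀ᶠ ξ in 𝓝 (0 : V), 𝓕 f (ξ₀ + s • ξ) * 𝓕 (g : V → ℂ) ξ = 1 := by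
    filter_upwards [hφ] with ξ hξ
    have h1 := congrArg (FT ξ) hg
    rw [map_add, map_smul, convOp_FT, map_sub, conv_FT hc, map_smul, hξ, hcF] at h1
    rw [← FT_apply, ← h1]
    simp only [smul_eq_mul]
    ring
  let G : V → ℂ := fun x => Real.fourierChar (inner ℝ x ξ₀) • ((s ^ Module.finrank ℝ V : ℝ) • g (s • x))
  have hGi : Integrable G := by
    have h1 : Integrable (fun x => (s ^ Module.finrank ℝ V : ℝ) • g (s • x)) :=
      ((L1.integrable_coeFn g).comp_smul hs0.ne').smul (s ^ Module.finrank ℝ V : ℝ)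
    have := (Real.fourierIntegral_convergent_iff (-ξ₀)).2 h1
    simpa [G] using this
  have hGF : ∀ ξ, 𝓕 G ξ = 𝓕 (g : V → ℂ) (s⁻¹ • (ξ - ξ₀)) := by
    intro ξ
    rw [Real.fourier_eq, Real.fourier_eq]
    have h1 := Measure.integral_comp_smul (volume : Measure V)
      (fun v => Real.fourierChar (-inner ℝ v (s⁻¹ • (ξ - ξ₀))) • g v) s
    have h2 : (∫ v, Real.fourierChar (-inner ℝ v (s⁻¹ • (ξ - ξ₀))) • g v) =
        (s ^ Module.finrank ℝ V : ℝ) • ∫ x, Real.fourierChar (-inner ℝ (s • x) (s⁻¹ • (ξ - ξ₀))) • g (s • x) := by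
      rw [h1, smul_smul, abs_of_pos (by positivity), mul_inv_cancel₀ (by positivity), one_smul]
    rw [h2, ← integral_smul]
    congr 1
    ext x
    simp only [G]
    rw [smul_smul, ← AddChar.map_add_eq_mul, smul_comm, inner_smul_left, inner_smul_right,
      inner_sub_right]
    congr 3
    simp
    field_simp
    ring
  refine ⟨G, hGi, ?_⟩
  have hcont : Tendsto (fun ξ : V => s⁻¹ • (ξ - ξ₀)) (𝓝 ξ₀) (𝓝 0) := by
    have : Continuous (fun ξ : V => s⁻¹ • (ξ - ξ₀)) := by fun_prop
    simpa using this.tendsto ξ₀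
  filter_upwards [hcont.eventually hgF] with ξ hξ
  rw [hGF]
  rw [smul_smul, mul_inv_cancel₀ hs0.ne', one_smul, add_sub_cancel] at hξ
  exact hξ

lemma cnv {f g : V → ℂ} (hf : Integrable f) (hg : Integrable g) :
    ∃ k : V → ℂ, (∀ x, k x = ∫ y, f (x - y) * g y) ∧ Integrable k ∧
      ∀ ξ, 𝓕 k ξ = 𝓕 f ξ * 𝓕 g ξ := by
  refine ⟨convolution g f (ContinuousLinearMap.mul ℂ ℂ) volume, ?_, ?_, ?_⟩
  · intro x
    simp [convolution, mul_comm]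
  · exact hg.integrable_convolution _ hf
  · intro ξ
    rw [Real.fourier_mul_convolution_eq hg hf, mul_comm]

lemma F_add {f g : V → ℂ} (hf : Integrable f) (hg : Integrable g) (ξ : V) :
    𝓕 (fun x => f x + g x) ξ = 𝓕 f ξ + 𝓕 g ξ := by
  simp only [Real.fourier_eq, smul_add]
  exact integral_add ((Real.fourierIntegral_convergent_iff ξ).2 hf)
    ((Real.fourierIntegral_convergent_iff ξ).2 hg)

lemma F_sub {f g : V → ℂ} (hf : Integrable f) (hg : Integrable g) (ξ : V) :
    𝓕 (fun x => f x - g x) ξ = 𝓕 f ξ - 𝓕 g ξ := by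
  simp only [Real.fourier_eq, smul_sub]
  exact integral_sub ((Real.fourierIntegral_convergent_iff ξ).2 hf)
    ((Real.fourierIntegral_convergent_iff ξ).2 hg)

lemma glob {f : V → ℂ} (hf : Integrable f) (h0 : ∀ ξ, 𝓕 f ξ ≠ 0) {K : Set V} (hK : IsCompact K) :
    ∃ g : V → ℂ, Integrable g ∧ ∀ ξ ∈ K, 𝓕 f ξ * 𝓕 g ξ = 1 := by
  refine hK.induction_on (p := fun K => ∃ g : V → ℂ, Integrable g ∧ ∀ ξ ∈ K, 𝓕 f ξ * 𝓕 g ξ = 1)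
    ?_ ?_ ?_ ?_
  · exact ⟨0, integrable_zero _ _ _, by simp⟩
  · rintro s t hst ⟨g, hg, h⟩
    exact ⟨g, hg, fun ξ hξ => h ξ (hst hξ)⟩
  · rintro s t ⟨g₁, hg₁, h₁⟩ ⟨g₂, hg₂, h₂⟩
    obtain ⟨k, -, hk, hkF⟩ := cnv hf hg₁
    obtain ⟨l, -, hl, hlF⟩ := cnv hk hg₂
    refine ⟨fun x => (g₁ x + g₂ x) - l x, (hg₁.add hg₂).sub hl, ?_⟩
    intro ξ hξ
    rw [F_sub (f := fun x => g₁ x + g₂ x) (hg₁.add hg₂) hl, hlF, hkF, F_add hg₁ hg₂]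
    rcases hξ with hξ | hξ
    · linear_combination (1 - 𝓕 f ξ * 𝓕 g₂ ξ) * h₁ ξ hξ
    · linear_combination (1 - 𝓕 f ξ * 𝓕 g₁ ξ) * h₂ ξ hξ
  · intro ξ₀ _
    obtain ⟨g, hg, h⟩ := loc hf ξ₀ (h0 ξ₀)
    exact ⟨_, mem_nhdsWithin_of_mem_nhds h, g, hg, fun ξ hξ => hξ⟩

theorem mainV {f h : V → ℂ} (hf : Integrable f) (hh : Integrable h) (h0 : ∀ ξ, 𝓕 f ξ ≠ 0)
    (hc : HasCompactSupport (𝓕 h)) :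
    ∃ g : V → ℂ, Integrable g ∧ ∀ᵐ x : V, (∫ y, f (x - y) * g y) = h x := by
  obtain ⟨g, hg, hgK⟩ := glob hf h0 hc
  obtain ⟨G, -, hG, hGF⟩ := cnv hg hh
  obtain ⟨k, hk, hki, hkF⟩ := cnv hf hG
  refine ⟨G, hG, ?_⟩
  have := aux_inj (hki.sub hh) (fun ξ => by
    refine (F_sub hki hh ξ).trans ?_
    rw [hkF, hGF]
    by_cases hξ : ξ ∈ tsupport (𝓕 h)
    · linear_combination (𝓕 h ξ) * hgK ξ hξ
    · rw [image_eq_zero_of_notMem_tsupport hξ]; ring)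
  filter_upwards [this] with x hx
  rw [← hk]
  exact sub_eq_zero.1 hx

end aux

lemma transfer (n : ℕ) (f : (Fin n → ℝ) → ℂ) (w : EuclideanSpace ℝ (Fin n)) :
    fourierT n f ((2 * Real.pi) • (WithLp.ofLp w)) = (((2 * Real.pi) ^ (-(n : ℝ) / 2) : ℝ) : ℂ) *
      𝓕 (fun v : EuclideanSpace ℝ (Fin n) => f (WithLp.ofLp v)) w := by
  rw [Real.fourier_eq', fourierT]
  congr 1
  rw [← (PiLp.volume_preserving_toLp (Fin n)).integral_comp
    (MeasurableEquiv.toLp 2 (Fin n → ℝ)).measurableEmbedding]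
  congr 1
  ext x
  simp only [smul_eq_mul]
  congr 2
  simp only [PiLp.inner_apply, Pi.smul_apply, smul_eq_mul, RCLike.inner_apply, conj_trivial]
  push_cast
  rw [Finset.mul_sum, Finset.mul_sum, Finset.sum_mul]
  refine Finset.sum_congr rfl fun i _ => ?_
  ring

/-- If `f ∈ L¹(ℝ^n, ℂ)` has nowhere-vanishing Fourier transform and
`h ∈ L¹(ℝ^n, ℂ)` has compactly supported Fourier transform, then there is
`g ∈ L¹(ℝ^n, ℂ)` with `f * g = h` (convolution). -/
theorem exists_L1_factor_of_fourier_ne_zero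
    (n : ℕ) (hn : 1 ≤ n) (f h : (Fin n → ℝ) → ℂ)
    (hf : Integrable f) (hh : Integrable h)
    (hfz : ∀ ξ : Fin n → ℝ, fourierT n f ξ ≠ 0)
    (hhc : HasCompactSupport (fourierT n h)) :
    ∃ g : (Fin n → ℝ) → ℂ, Integrable g ∧
      ∀ᵐ x : Fin n → ℝ, (∫ y : Fin n → ℝ, f (x - y) * g y) = h x := by
  have hC : (((2 * Real.pi) ^ (-(n : ℝ) / 2) : ℝ) : ℂ) ≠ 0 := by
    have : (0 : ℝ) < (2 * Real.pi) ^ (-(n : ℝ) / 2) := by positivity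
    exact_mod_cast this.ne'
  have mp := PiLp.volume_preserving_ofLp (Fin n)
  have mpt := PiLp.volume_preserving_toLp (Fin n)
  have hpi : (2 * Real.pi) ≠ 0 := by positivity
  let e : EuclideanSpace ℝ (Fin n) ≃ₜ (Fin n → ℝ) :=
    (EuclideanSpace.equiv (Fin n) ℝ).toHomeomorph.trans (Homeomorph.smulOfNeZero (2 * Real.pi) hpi)
  have he : ∀ w, e w = (2 * Real.pi) • (WithLp.ofLp w) := fun w => rfl
  have hF : 𝓕 (fun v : EuclideanSpace ℝ (Fin n) => h (WithLp.ofLp v)) =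
      fun w => ((((2 * Real.pi) ^ (-(n : ℝ) / 2) : ℝ) : ℂ))⁻¹ * fourierT n h (e w) := by
    ext w
    rw [he, transfer, inv_mul_cancel_left₀ hC]
  obtain ⟨g, hg, hgc⟩ := mainV (V := EuclideanSpace ℝ (Fin n))
    (f := fun v => f (WithLp.ofLp v)) (h := fun v => h (WithLp.ofLp v))
    (mp.integrable_comp_of_integrable hf) (mp.integrable_comp_of_integrable hh)
    (fun ξ h0 => hfz _ (by rw [transfer n f ξ, h0, mul_zero]))
    (by
      rw [hF]
      exact (hhc.comp_homeomorph e).mul_left)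
  refine ⟨fun x => g (WithLp.toLp 2 x), mpt.integrable_comp_of_integrable hg, ?_⟩
  filter_upwards [mpt.quasiMeasurePreserving.ae hgc] with x hx
  rw [← (PiLp.volume_preserving_toLp (Fin n)).integral_comp
    (MeasurableEquiv.toLp 2 (Fin n → ℝ)).measurableEmbedding] at hx
  exact hx
end
end

section
/- Let n ≥ 2, let q : ℝ^n_+ → ℝ satisfy the cost-function conditions, let c ∈ ℝ^n_+, set α = c_1 + ⋯ + c_n, let h ∈ L^1_α(ℝ^1_+), and let f ∈ L^1_{I−c}(ℝ^n_+) ∩ C(ℝ^n_+). Then for every z ∈ ℂ^n with Re z = c, writing s = z_1 + ⋯ + z_n, one has (M R^h_q f)(z) = Γ(s)^{−1} (Mf)(I − z) · (M e^{−q})(z) · (Mh)(s), where Γ is the Gamma function. -/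
open MeasureTheory Complex Set

noncomputable section

/-- The positive orthant `ℝ^n_+`. -/
def posOrth (n : ℕ) : Set (Fin n → ℝ) := {x | ∀ i, 0 < x i}

/-- `q` satisfies the cost-function conditions: `C¹` on `ℝ^n_+`, positive,
positively homogeneous of degree one, with bounded level sets. -/
def IsCostFun (n : ℕ) (q : (Fin n → ℝ) → ℝ) : Prop :=
  ContDiffOn ℝ 1 q (posOrth n) ∧
  (∀ x ∈ posOrth n, 0 < q x) ∧
  (∀ lam : ℝ, 0 < lam → ∀ x ∈ posOrth n, q (fun i => lam * x i) = lam * q x) ∧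
  (∀ t : ℝ, Bornology.IsBounded {x | x ∈ posOrth n ∧ q x = t})

/-- The `n`-dimensional Mellin transform `(Mg)(z) = ∫_{ℝ^n_+} x^{z-I} g(x) dx`. -/
def mellinT (n : ℕ) (g : (Fin n → ℝ) → ℝ) (z : Fin n → ℂ) : ℂ :=
  ∫ x in posOrth n, (∏ i, (x i : ℂ) ^ (z i - 1)) * g x

/-- Membership in `L¹_c(ℝ^n_+)`: measurable with `∫ |f| x^{c-I} < ∞`. -/
def MemL1w (n : ℕ) (c : Fin n → ℝ) (f : (Fin n → ℝ) → ℝ) : Prop :=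
  IntegrableOn (fun x => f x * ∏ i, x i ^ (c i - 1)) (posOrth n)

/-- Membership in `L¹_α(ℝ¹_+)`: measurable with `∫_0^∞ |h(t)| t^{α-1} dt < ∞`. -/
def MemL1w1 (α : ℝ) (h : ℝ → ℝ) : Prop :=
  IntegrableOn (fun t => h t * t ^ (α - 1)) (Ioi (0 : ℝ))

/-- The operator `(R^h_q f)(p) = ∫_{ℝ^n_+} h(q(p₁x₁,…,pₙxₙ)) f(x) dx`. -/
def Rhq (n : ℕ) (q : (Fin n → ℝ) → ℝ) (h : ℝ → ℝ) (f : (Fin n → ℝ) → ℝ)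
    (p : Fin n → ℝ) : ℝ :=
  ∫ x in posOrth n, h (q (fun i => p i * x i)) * f x

theorem image_exp_posOrth (n : ℕ) :
    (fun (a : Fin n → ℝ) i => Real.exp (a i)) '' univ = posOrth n := by
  ext x
  simp only [image_univ, mem_range, posOrth, mem_ofPred_eq]
  constructor
  · rintro ⟨a, rfl⟩ i
    exact Real.exp_pos _
  · intro hx
    exact ⟨fun i => Real.log (x i), funext fun i => Real.exp_log (hx i)⟩

theorem injOn_exp_pi (n : ℕ) :
    InjOn (fun (a : Fin n → ℝ) i => Real.exp (a i)) univ := by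
  intro a _ b _ hab
  funext i
  exact Real.exp_injective (congrFun hab i)

theorem hasFDeriv_exp_pi (n : ℕ) (a : Fin n → ℝ) :
    HasFDerivWithinAt (fun (a : Fin n → ℝ) i => Real.exp (a i))
      (ContinuousLinearMap.pi fun i =>
        (Real.exp (a i) • ContinuousLinearMap.id ℝ ℝ) ∘SL ContinuousLinearMap.proj i) univ a := by
  rw [hasFDerivWithinAt_univ, hasFDerivAt_pi]
  intro i
  have h1 : HasFDerivAt (fun a : Fin n → ℝ => a i)
      (ContinuousLinearMap.proj (R := ℝ) (φ := fun _ : Fin n => ℝ) i) a :=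
    (ContinuousLinearMap.proj (R := ℝ) (φ := fun _ : Fin n => ℝ) i).hasFDerivAt
  refine h1.exp.congr_fderiv ?_
  ext v
  simp

theorem det_exp_pi (n : ℕ) (a : Fin n → ℝ) :
    |(ContinuousLinearMap.pi fun i : Fin n =>
        (Real.exp (a i) • ContinuousLinearMap.id ℝ ℝ) ∘SL
          ContinuousLinearMap.proj (R := ℝ) (φ := fun _ : Fin n => ℝ) i).det|
      = Real.exp (∑ i, a i) := by
  rw [ContinuousLinearMap.det_pi]
  have : ∀ i, (Real.exp (a i) • ContinuousLinearMap.id ℝ ℝ).det = Real.exp (a i) := by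
    intro i
    simp [ContinuousLinearMap.det]
  simp only [this]
  rw [← Real.exp_sum, abs_of_pos (Real.exp_pos _)]

theorem cv_integral (n : ℕ) (g : (Fin n → ℝ) → ℂ) :
    ∫ x in posOrth n, g x
      = ∫ a : Fin n → ℝ, Real.exp (∑ i, a i) • g (fun i => Real.exp (a i)) := by
  rw [← image_exp_posOrth, integral_image_eq_integral_abs_det_fderiv_smul volume
    MeasurableSet.univ (fun a _ => hasFDeriv_exp_pi n a) (injOn_exp_pi n)]
  simp only [det_exp_pi, Measure.restrict_univ]

theorem cv_integral_real (n : ℕ) (g : (Fin n → ℝ) → ℝ) :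
    ∫ x in posOrth n, g x
      = ∫ a : Fin n → ℝ, Real.exp (∑ i, a i) • g (fun i => Real.exp (a i)) := by
  rw [← image_exp_posOrth, integral_image_eq_integral_abs_det_fderiv_smul volume
    MeasurableSet.univ (fun a _ => hasFDeriv_exp_pi n a) (injOn_exp_pi n)]
  simp only [det_exp_pi, Measure.restrict_univ]

theorem cv_integrable (n : ℕ) (g : (Fin n → ℝ) → ℝ) :
    IntegrableOn g (posOrth n)
      ↔ Integrable (fun a : Fin n → ℝ => Real.exp (∑ i, a i) • g (fun i => Real.exp (a i))) := by
  rw [← image_exp_posOrth, integrableOn_image_iff_integrableOn_abs_det_fderiv_smul volume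
    MeasurableSet.univ (fun a _ => hasFDeriv_exp_pi n a) (injOn_exp_pi n)]
  simp only [det_exp_pi, integrableOn_univ]

theorem cv1_integral (g : ℝ → ℂ) :
    ∫ x in Ioi (0:ℝ), g x = ∫ a : ℝ, Real.exp a • g (Real.exp a) := by
  rw [← Real.range_exp, ← image_univ, integral_image_eq_integral_abs_deriv_smul
    MeasurableSet.univ (fun a _ => (Real.hasDerivAt_exp a).hasDerivWithinAt)
    Real.exp_injective.injOn]
  simp

theorem cv1_integrable (g : ℝ → ℝ) :
    IntegrableOn g (Ioi (0:ℝ)) ↔ Integrable (fun a : ℝ => Real.exp a • g (Real.exp a)) := by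
  rw [← Real.range_exp, ← image_univ, integrableOn_image_iff_integrableOn_abs_deriv_smul
    MeasurableSet.univ (fun a _ => (Real.hasDerivAt_exp a).hasDerivWithinAt)
    Real.exp_injective.injOn]
  simp

theorem exp_cpow_aux (t : ℝ) (w : ℂ) : ((Real.exp t : ℝ) : ℂ) ^ w = cexp (w * t) := by
  rw [Complex.ofReal_exp, Complex.cpow_def_of_ne_zero (Complex.exp_ne_zero _), ← Complex.ofReal_exp,
    ← Complex.ofReal_log (Real.exp_pos _).le, Real.log_exp, mul_comm]

theorem mellinT_exp (n : ℕ) (g : (Fin n → ℝ) → ℝ) (z : Fin n → ℂ) :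
    mellinT n g z = ∫ a : Fin n → ℝ, cexp (∑ i, z i * a i) * g (fun i => Real.exp (a i)) := by
  rw [mellinT, cv_integral]
  refine integral_congr_ae (Filter.Eventually.of_forall fun a => ?_)
  simp only [exp_cpow_aux]
  rw [← Complex.exp_sum, Complex.real_smul, ← mul_assoc, Complex.ofReal_exp, ← Complex.exp_add]
  congr 2
  push_cast
  rw [← Finset.sum_add_distrib]
  exact Finset.sum_congr rfl fun i _ => by ring

theorem mellin_exp (g : ℝ → ℂ) (s : ℂ) :
    mellin g s = ∫ t : ℝ, cexp (s * t) * g (Real.exp t) := by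
  rw [mellin, cv1_integral]
  refine integral_congr_ae (Filter.Eventually.of_forall fun a => ?_)
  simp only [exp_cpow_aux, smul_eq_mul]
  rw [Complex.real_smul, ← mul_assoc, Complex.ofReal_exp, ← Complex.exp_add]
  congr 2
  ring

/-- the measure preserving map `(u, r) ↦ (u + (r - Q u) 1, Q u)`. -/
theorem mp_map (n : ℕ) (Q : (Fin n → ℝ) → ℝ) (hQm : Measurable Q)
    (hQ : ∀ (a : Fin n → ℝ) (w : ℝ), Q (fun i => a i + w) = Q a + w) :
    MeasurePreserving (fun p : (Fin n → ℝ) × ℝ => ((fun i => p.1 i + (p.2 - Q p.1)), Q p.1))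
      (volume.prod volume) (volume.prod volume) := by
  have hA : MeasurePreserving (fun p : (Fin n → ℝ) × ℝ => (id p.1, p.2 - Q p.1))
      (volume.prod volume) (volume.prod volume) := by
    refine MeasurePreserving.skew_product (g := fun a r => r - Q a) (MeasurePreserving.id _) ?_ ?_
    · exact measurable_snd.sub (hQm.comp measurable_fst)
    · exact Filter.Eventually.of_forall fun a => (measurePreserving_sub_right volume (Q a)).map_eq
  have hC : MeasurePreserving (fun p : (Fin n → ℝ) × ℝ => (id p.1, Q p.1 - p.2))
      (volume.prod volume) (volume.prod volume) := by
    refine MeasurePreserving.skew_product (g := fun a r => Q a - r) (MeasurePreserving.id _) ?_ ?_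
    · exact (hQm.comp measurable_fst).sub measurable_snd
    · exact Filter.Eventually.of_forall fun a => (Measure.measurePreserving_sub_left volume (Q a)).map_eq
  have hB : MeasurePreserving (fun p : ℝ × (Fin n → ℝ) => (id p.1, fun i => p.2 i + p.1))
      (volume.prod volume) (volume.prod volume) := by
    refine MeasurePreserving.skew_product (g := fun (r : ℝ) (a : Fin n → ℝ) i => a i + r)
      (MeasurePreserving.id _) ?_ ?_
    · refine measurable_pi_lambda _ fun i => ?_
      exact ((measurable_pi_apply i).comp measurable_snd).add measurable_fst
    · refine Filter.Eventually.of_forall fun r => ?_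
      exact (measurePreserving_add_right (volume : Measure (Fin n → ℝ)) (fun _ => r)).map_eq
  have hs1 : MeasurePreserving (Prod.swap : (Fin n → ℝ) × ℝ → _)
      (volume.prod volume) (volume.prod volume) := Measure.measurePreserving_swap
  have hs2 : MeasurePreserving (Prod.swap : ℝ × (Fin n → ℝ) → _)
      (volume.prod volume) (volume.prod volume) := Measure.measurePreserving_swap
  have := hC.comp (hs2.comp (hB.comp (hs1.comp hA)))
  convert this using 1
  funext p
  simp [hQ]

theorem key (n : ℕ) (Q : (Fin n → ℝ) → ℝ) (hQm : Measurable Q)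
    (hQ : ∀ (a : Fin n → ℝ) (w : ℝ), Q (fun i => a i + w) = Q a + w)
    (z : Fin n → ℂ) (H : ℝ → ℂ)
    (hH : Integrable fun t : ℝ => cexp ((∑ i, z i) * t) * H t)
    (hE : Integrable fun a : Fin n → ℝ => cexp (∑ i, z i * a i) * Real.exp (- Real.exp (Q a))) :
    Integrable (fun a : Fin n → ℝ => cexp (∑ i, z i * a i) * H (Q a)) ∧
    (∫ a : Fin n → ℝ, cexp (∑ i, z i * a i) * H (Q a)) *
      (∫ t : ℝ, cexp ((∑ i, z i) * t) * Real.exp (- Real.exp t)) =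
    (∫ a : Fin n → ℝ, cexp (∑ i, z i * a i) * Real.exp (- Real.exp (Q a))) *
      ∫ t : ℝ, cexp ((∑ i, z i) * t) * H t := by
  have hmp := mp_map n Q hQm hQ
  have hP := hE.mul_prod hH
  have hS := hmp.integrable_comp_of_integrable hP
  have hI := integral_map hmp.aemeasurable (hmp.map_eq.symm ▸ hP.aestronglyMeasurable)
  rw [hmp.map_eq] at hI
  have e : ∀ p : (Fin n → ℝ) × ℝ,
      (cexp (∑ i, z i * ((p.1 i + (p.2 - Q p.1) : ℝ) : ℂ)) *
        Real.exp (- Real.exp (Q (fun i => p.1 i + (p.2 - Q p.1))))) *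
        (cexp ((∑ i, z i) * (Q p.1 : ℝ)) * H (Q p.1)) =
      (cexp (∑ i, z i * p.1 i) * H (Q p.1)) *
        (cexp ((∑ i, z i) * p.2) * Real.exp (- Real.exp p.2)) := by
    intro p
    have e1 : cexp (∑ i, z i * ((p.1 i + (p.2 - Q p.1) : ℝ) : ℂ)) * cexp ((∑ i, z i) * (Q p.1 : ℝ))
        = cexp (∑ i, z i * p.1 i) * cexp ((∑ i, z i) * p.2) := by
      rw [← Complex.exp_add, ← Complex.exp_add]
      congr 1
      rw [Finset.sum_mul, Finset.sum_mul, ← Finset.sum_add_distrib, ← Finset.sum_add_distrib]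
      refine Finset.sum_congr rfl fun i _ => ?_
      push_cast
      ring
    have e2 : Q (fun i => p.1 i + (p.2 - Q p.1)) = p.2 := by rw [hQ]; ring
    rw [e2]
    linear_combination (Real.exp (- Real.exp p.2) * H (Q p.1)) * e1
  have hS' : Integrable (fun p : (Fin n → ℝ) × ℝ => (cexp (∑ i, z i * p.1 i) * H (Q p.1)) *
        (cexp ((∑ i, z i) * p.2) * Real.exp (- Real.exp p.2))) (volume.prod volume) :=
    hS.congr (Filter.Eventually.of_forall fun p => e p)
  constructor
  · obtain ⟨r, hr⟩ := hS'.prod_left_ae.exists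
    have hne : (cexp ((∑ i, z i) * r) * Real.exp (- Real.exp r)) ≠ 0 :=
      mul_ne_zero (Complex.exp_ne_zero _) (by exact_mod_cast (Real.exp_pos _).ne')
    refine (hr.mul_const (cexp ((∑ i, z i) * r) * Real.exp (- Real.exp r))⁻¹).congr
      (Filter.Eventually.of_forall fun a => ?_)
    simp only
    rw [mul_assoc, mul_inv_cancel₀ hne, mul_one]
  · rw [← integral_prod_mul, ← integral_prod_mul, hI]
    exact integral_congr_ae (Filter.Eventually.of_forall fun p => (e p).symm)

theorem Gamma_exp (s : ℂ) (hs : 0 < s.re) :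
    ∫ t : ℝ, cexp (s * t) * Real.exp (- Real.exp t) = Complex.Gamma s := by
  rw [Complex.Gamma_eq_integral hs, Complex.GammaIntegral_eq_mellin, mellin_exp]

theorem conv_aux (n : ℕ) (K G : (Fin n → ℝ) → ℂ) (hK : Integrable K) (hG : Integrable G) :
    ∫ b : Fin n → ℝ, ∫ a : Fin n → ℝ, G a * K (b + a) = (∫ a, G a) * ∫ a, K a := by
  have h1 := integral_convolution (μ := volume) (ν := volume) (ContinuousLinearMap.mul ℂ ℂ)
    hG.comp_neg hK
  simp only [ContinuousLinearMap.mul_apply'] at h1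
  rw [integral_neg_eq_self (fun a => G a)] at h1
  rw [← h1]
  refine integral_congr_ae (Filter.Eventually.of_forall fun b => ?_)
  simp only [convolution, ContinuousLinearMap.mul_apply']
  rw [← integral_neg_eq_self]
  simp [sub_eq_add_neg]

theorem int_exp1 (c δ : ℝ) (hc : 0 < c) (hδ : 0 < δ) :
    Integrable fun t : ℝ => Real.exp (c * t) * Real.exp (- (δ * Real.exp t)) := by
  have := (cv1_integrable _).1 (integrableOn_rpow_mul_exp_neg_mul_rpow (p := 1) (s := c - 1) (b := δ)
    (by linarith) one_pos hδ)
  refine this.congr (Filter.Eventually.of_forall fun t => ?_)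
  simp only [Real.rpow_one, smul_eq_mul, ← Real.exp_mul, ← Real.exp_add]
  congr 1
  ring

theorem int_expQ (n : ℕ) (hn : 0 < n) (Q : (Fin n → ℝ) → ℝ) (hQm : Measurable Q) (C : ℝ) (hC : 0 < C)
    (hb : ∀ a i, Real.exp (a i) ≤ C * Real.exp (Q a)) (z : Fin n → ℂ) (hz : ∀ i, 0 < (z i).re) :
    Integrable fun a : Fin n → ℝ => cexp (∑ i, z i * a i) * Real.exp (- Real.exp (Q a)) := by
  have hn' : (0 : ℝ) < n := by exact_mod_cast hn
  have h0 := Integrable.fintype_prod (μ := fun _ : Fin n => (volume : Measure ℝ))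
    (fun i => int_exp1 (z i).re (1 / (n * C)) (hz i) (by positivity))
  refine Integrable.mono' h0 ?_ (Filter.Eventually.of_forall fun a => ?_)
  · apply Measurable.aestronglyMeasurable
    fun_prop
  · rw [norm_mul, Complex.norm_exp, Complex.norm_real, Real.norm_of_nonneg (Real.exp_pos _).le,
      Finset.prod_mul_distrib, ← Real.exp_sum, ← Real.exp_sum]
    have : (∑ i, z i * (a i : ℂ)).re = ∑ i, (z i).re * a i := by simp
    rw [this]
    gcongr
    rw [Finset.sum_neg_distrib, ← Finset.mul_sum]
    apply neg_le_neg
    have : ∑ i, Real.exp (a i) ≤ n * (C * Real.exp (Q a)) := by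
      calc _ ≤ ∑ i : Fin n, (C * Real.exp (Q a)) := Finset.sum_le_sum fun i _ => hb a i
        _ = _ := by simp
    rw [div_mul_eq_mul_div, one_mul, div_le_iff₀ (by positivity)]
    linarith

theorem int_toComplex {X : Type*} [MeasureSpace X] (g : X → ℝ) (hg : Integrable g) :
    Integrable (fun x => (g x : ℂ)) := hg.ofReal

/-- Projection formula: for `f ∈ L¹_{I-c}(ℝ^n_+) ∩ C(ℝ^n_+)`, `h ∈ L¹_α(ℝ¹_+)` and
every `z` with `Re z = c`, writing `s = z₁ + ⋯ + zₙ`,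
`(M R^h_q f)(z) = Γ(s)⁻¹ (Mf)(I-z) (M e^{-q})(z) (Mh)(s)`. -/
theorem mellin_Rhq_eq
    (n : ℕ) (hn : 2 ≤ n) (q : (Fin n → ℝ) → ℝ) (hq : IsCostFun n q)
    (c : Fin n → ℝ) (hc : ∀ i, 0 < c i) (α : ℝ) (hα : α = ∑ i, c i)
    (h : ℝ → ℝ) (hh : MemL1w1 α h)
    (f : (Fin n → ℝ) → ℝ) (hf : MemL1w n (fun i => 1 - c i) f)
    (hfc : ContinuousOn f (posOrth n)) :
    ∀ z : Fin n → ℂ, (∀ i, (z i).re = c i) →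
      mellinT n (Rhq n q h f) z =
        (Complex.Gamma (∑ i, z i))⁻¹ * mellinT n f (fun i => 1 - z i) *
          mellinT n (fun x => Real.exp (-q x)) z *
          mellin (fun t => (h t : ℂ)) (∑ i, z i) := by

  obtain ⟨hq1, hq2, hq3, hq4⟩ := hq
  intro z hz
  have hn0 : 0 < n := by omega
  set Q : (Fin n → ℝ) → ℝ := fun a => Real.log (q fun i => Real.exp (a i)) with hQdef
  have hpos : ∀ a : Fin n → ℝ, (fun i => Real.exp (a i)) ∈ posOrth n := fun a i => Real.exp_pos _
  have hqQ : ∀ a : Fin n → ℝ, q (fun i => Real.exp (a i)) = Real.exp (Q a) := fun a =>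
    (Real.exp_log (hq2 _ (hpos a))).symm
  have hQc : Continuous Q := by
    refine Continuous.log ?_ fun a => (hq2 _ (hpos a)).ne'
    refine hq1.continuousOn.comp_continuous (by fun_prop) hpos
  have hQm := hQc.measurable
  have hQ : ∀ (a : Fin n → ℝ) (w : ℝ), Q (fun i => a i + w) = Q a + w := by
    intro a w
    apply Real.exp_injective
    rw [← hqQ, Real.exp_add, ← hqQ, mul_comm, ← hq3 _ (Real.exp_pos w) _ (hpos a)]
    congr 1
    funext i
    rw [Real.exp_add, mul_comm]
  obtain ⟨C, hC, hCb⟩ := (hq4 1).exists_pos_norm_le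
  have hb : ∀ a i, Real.exp (a i) ≤ C * Real.exp (Q a) := by
    intro a i
    have h1 := hCb (fun i => Real.exp (a i + -Q a)) ⟨fun i => Real.exp_pos _, by
      have := hqQ (fun i => a i + -Q a)
      rw [hQ] at this
      simpa using this⟩
    have h2 := (norm_le_pi_norm _ i).trans h1
    rw [Real.norm_of_nonneg (Real.exp_pos _).le, Real.exp_add, Real.exp_neg,
      ← div_eq_mul_inv, div_le_iff₀ (Real.exp_pos _)] at h2
    exact h2
  have hre : (∑ i, z i).re = α := by simp [hα, hz]
  have hαpos : 0 < α := by
    rw [hα]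
    have : Nonempty (Fin n) := ⟨⟨0, hn0⟩⟩
    exact Finset.sum_pos (fun i _ => hc i) Finset.univ_nonempty
  have hE := int_expQ n hn0 Q hQm C hC hb z (fun i => by rw [hz]; exact hc i)
  have hH : Integrable fun t : ℝ => cexp ((∑ i, z i) * t) * (h (Real.exp t) : ℂ) := by
    have h1 := int_toComplex _ ((cv1_integrable _).1 hh)
    have h2 := h1.bdd_mul (f := fun t : ℝ => cexp (((∑ i, z i) - α) * t)) (c := 1)
      (by apply Continuous.aestronglyMeasurable; fun_prop)
      (Filter.Eventually.of_forall fun t => by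
        rw [Complex.norm_exp]
        simp [hre, -Complex.re_sum, -Complex.im_sum])
    refine h2.congr (Filter.Eventually.of_forall fun t => ?_)
    simp only [smul_eq_mul, ← Real.exp_mul]
    push_cast
    have : cexp ((∑ i, z i) * t) = cexp (((∑ i, z i) - α) * t) * (cexp t * cexp (t * (α - 1))) := by
      rw [← Complex.exp_add, ← Complex.exp_add]
      congr 1
      ring
    rw [this]
    ring
  have hG : Integrable fun a : Fin n → ℝ =>
      cexp (∑ i, (1 - z i) * a i) * (f (fun i => Real.exp (a i)) : ℂ) := by
    have h1 := int_toComplex _ ((cv_integrable _ _).1 hf)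
    have h2 := h1.bdd_mul (f := fun a : Fin n → ℝ => cexp (∑ i, (c i - z i) * a i)) (c := 1)
      (by apply Continuous.aestronglyMeasurable; fun_prop)
      (Filter.Eventually.of_forall fun t => by
        rw [Complex.norm_exp]
        simp [hz])
    refine h2.congr (Filter.Eventually.of_forall fun a => ?_)
    simp only [smul_eq_mul, ← Real.exp_mul, ← Real.exp_sum]
    push_cast
    have : cexp (∑ i, (1 - z i) * a i) = cexp (∑ i, (c i - z i) * a i) *
        (cexp (∑ i, (a i : ℂ)) * cexp (∑ i, (a i : ℂ) * (1 - c i - 1))) := by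
      rw [← Complex.exp_add, ← Complex.exp_add]
      congr 1
      rw [← Finset.sum_add_distrib, ← Finset.sum_add_distrib]
      exact Finset.sum_congr rfl fun i _ => by ring
    rw [this]
    ring
  obtain ⟨hK, hKe⟩ := key n Q hQm hQ z (fun t => (h (Real.exp t) : ℂ)) hH hE
  have hs : 0 < (∑ i, z i).re := by rw [hre]; exact hαpos
  rw [Gamma_exp _ hs] at hKe
  have hΓ := Complex.Gamma_ne_zero_of_re_pos hs
  have hL : mellinT n (Rhq n q h f) z =
      (∫ a : Fin n → ℝ, cexp (∑ i, (1 - z i) * a i) * (f (fun i => Real.exp (a i)) : ℂ)) *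
      ∫ a : Fin n → ℝ, cexp (∑ i, z i * a i) * (h (Real.exp (Q a)) : ℂ) := by
    rw [← conv_aux n _ _ hK hG, mellinT_exp]
    refine integral_congr_ae (Filter.Eventually.of_forall fun b => ?_)
    simp only [Rhq]
    rw [cv_integral_real, ← integral_complex_ofReal, ← integral_const_mul]
    refine integral_congr_ae (Filter.Eventually.of_forall fun a => ?_)
    have e1 : q (fun i => Real.exp (b i) * Real.exp (a i)) = Real.exp (Q (b + a)) := by
      rw [← hqQ]
      congr 1
      funext i
      rw [Pi.add_apply, Real.exp_add]
    simp only [e1, smul_eq_mul]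
    push_cast
    have : cexp (∑ i, z i * b i) * cexp (∑ i, (a i : ℂ)) =
        cexp (∑ i, (1 - z i) * a i) * cexp (∑ i, z i * ((b + a) i : ℝ)) := by
      rw [← Complex.exp_add, ← Complex.exp_add]
      congr 1
      rw [← Finset.sum_add_distrib, ← Finset.sum_add_distrib]
      refine Finset.sum_congr rfl fun i _ => ?_
      rw [Pi.add_apply]
      push_cast
      ring
    linear_combination ((h (Real.exp (Q (b + a))) : ℂ) * (f fun i => Real.exp (a i))) * this
  rw [hL, mellinT_exp, mellinT_exp, mellin_exp]
  simp only [hqQ]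
  rw [mul_assoc, ← hKe]
  field_simp
end
end

section
/- Let n ≥ 2, let q : ℝ^n_+ → ℝ satisfy the cost-function conditions, let c ∈ ℝ^n_+, set α = c_1 + ⋯ + c_n, let 1 ≤ r < ∞, let h ∈ L^1_α(ℝ^1_+), and let f ∈ L^r_{I−c}(ℝ^n_+) ∩ C(ℝ^n_+). Then ‖R^h_q f‖_{r,c} ≤ Γ(α)^{−1} ‖e^{−q}‖_{1,c} ‖h‖_{1,α} ‖f‖_{r,I−c}, where Γ is the Gamma function; in particular R^h_q f ∈ L^r_c(ℝ^n_+). -/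
open MeasureTheory Complex Set

noncomputable section

/-- Membership in `L^r_c(ℝ^n_+)` for `1 ≤ r < ∞`:
measurable with `∫ |f|^r x^{rc-I} < ∞`. -/
def MemLrw (n : ℕ) (r : ℝ) (c : Fin n → ℝ) (f : (Fin n → ℝ) → ℝ) : Prop :=
  AEStronglyMeasurable f (volume.restrict (posOrth n)) ∧
  IntegrableOn (fun x => |f x| ^ r * ∏ i, x i ^ (r * c i - 1)) (posOrth n)

/-- The norm `‖f‖_{r,c} = (∫_{ℝ^n_+} |f|^r x^{rc-I} dx)^{1/r}`. -/
def normLrw (n : ℕ) (r : ℝ) (c : Fin n → ℝ) (f : (Fin n → ℝ) → ℝ) : ℝ :=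
  (∫ x in posOrth n, |f x| ^ r * ∏ i, x i ^ (r * c i - 1)) ^ (1 / r)

/-- The norm `‖h‖_{1,α} = ∫_0^∞ |h(t)| t^{α-1} dt`. -/
def normL1w1 (α : ℝ) (h : ℝ → ℝ) : ℝ :=
  ∫ t in Ioi (0 : ℝ), |h t| * t ^ (α - 1)

open scoped ENNReal

lemma mp_gen {X : Type*} [MeasurableSpace X] (μ : Measure X) (T : X → X) (hT : Measurable T)
    (k : ℝ≥0∞) (hk : k • Measure.map T μ = μ) (D : X → ℝ≥0∞) (hD : Measurable D)
    (hDT : ∀ x, D x = k * D (T x)) :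
    MeasurePreserving T (μ.withDensity D) (μ.withDensity D) := by
  refine ⟨hT, ?_⟩
  ext s hs
  rw [Measure.map_apply hT hs, withDensity_apply _ (hT hs), withDensity_apply _ hs,
    ← lintegral_indicator (hT hs), ← lintegral_indicator hs]
  conv_rhs => rw [← hk]
  rw [lintegral_smul_measure, lintegral_map (hD.indicator hs) hT, smul_eq_mul,
    ← lintegral_const_mul k (f := fun a => s.indicator D (T a)) ((hD.indicator hs).comp hT)]
  refine lintegral_congr fun x => ?_
  by_cases hx : T x ∈ s
  · rw [indicator_of_mem (show x ∈ T ⁻¹' s from hx), indicator_of_mem hx, hDT]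
  · rw [indicator_of_notMem (show x ∉ T ⁻¹' s from hx), indicator_of_notMem hx, mul_zero]

/-- monomial weight -/
def Wt (n : ℕ) (a : Fin n → ℝ) (x : Fin n → ℝ) : ℝ≥0∞ := ENNReal.ofReal (∏ i, x i ^ (a i))

@[fun_prop]
lemma measurable_Wt (n : ℕ) (a : Fin n → ℝ) : Measurable (Wt n a) := by
  unfold Wt
  fun_prop

lemma measurableSet_posOrth (n : ℕ) : MeasurableSet (posOrth n) := by
  have : posOrth n = ⋂ i, {x | 0 < x i} := by ext; simp [posOrth]
  rw [this]
  exact MeasurableSet.iInter fun i => measurableSet_lt measurable_const (measurable_pi_apply i)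

lemma posOrth_mul {n : ℕ} {p x : Fin n → ℝ} (hp : p ∈ posOrth n) (hx : x ∈ posOrth n) :
    (fun i => p i * x i) ∈ posOrth n := fun i => mul_pos (hp i) (hx i)

lemma Wt_mul {n : ℕ} (a : Fin n → ℝ) {p x : Fin n → ℝ} (hp : p ∈ posOrth n) (hx : x ∈ posOrth n) :
    Wt n a (fun i => p i * x i) = Wt n a p * Wt n a x := by
  unfold Wt
  rw [← ENNReal.ofReal_mul (Finset.prod_nonneg fun i _ => Real.rpow_nonneg (hp i).le _),
    ← Finset.prod_mul_distrib]
  congr 1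
  exact Finset.prod_congr rfl fun i _ => Real.mul_rpow (hp i).le (hx i).le

lemma Wt_add {n : ℕ} (a b : Fin n → ℝ) {x : Fin n → ℝ} (hx : x ∈ posOrth n) :
    Wt n a x * Wt n b x = Wt n (fun i => a i + b i) x := by
  unfold Wt
  rw [← ENNReal.ofReal_mul (Finset.prod_nonneg fun i _ => Real.rpow_nonneg (hx i).le _),
    ← Finset.prod_mul_distrib]
  congr 1
  exact Finset.prod_congr rfl fun i _ => (Real.rpow_add (hx i) _ _).symm

lemma Wt_rpow {n : ℕ} (a : Fin n → ℝ) (r : ℝ) (hr : 0 ≤ r) {x : Fin n → ℝ} (hx : x ∈ posOrth n) :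
    Wt n a x ^ r = Wt n (fun i => r * a i) x := by
  unfold Wt
  rw [ENNReal.ofReal_rpow_of_nonneg
    (Finset.prod_nonneg fun i _ => Real.rpow_nonneg (hx i).le _) hr,
    ← Real.finsetProd_rpow _ _ (fun i _ => Real.rpow_nonneg (hx i).le _)]
  congr 1
  refine Finset.prod_congr rfl fun i _ => ?_
  rw [← Real.rpow_mul (hx i).le, mul_comm]

lemma Wt_ne_zero {n : ℕ} (a : Fin n → ℝ) {x : Fin n → ℝ} (hx : x ∈ posOrth n) :
    Wt n a x ≠ 0 := by
  unfold Wt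
  rw [Ne, ENNReal.ofReal_eq_zero, not_le]
  exact Finset.prod_pos fun i _ => Real.rpow_pos_of_pos (hx i) _

lemma Wt_const {n : ℕ} (a : Fin n → ℝ) {t : ℝ} (ht : 0 < t) :
    Wt n a (fun _ => t) = ENNReal.ofReal (t ^ (∑ i, a i)) := by
  unfold Wt
  rw [Real.rpow_sum_of_pos ht]

/-- multiplicative Haar measure on the orthant -/
def mm (n : ℕ) : Measure (Fin n → ℝ) :=
  volume.withDensity ((posOrth n).indicator (Wt n (fun _ => -1)))

/-- multiplicative Haar measure on the half line -/
def m1 : Measure ℝ :=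
  volume.withDensity ((Ioi (0:ℝ)).indicator (fun t => ENNReal.ofReal (t⁻¹)))

instance (n : ℕ) : SFinite (mm n) := by unfold mm; infer_instance
instance : SFinite m1 := by unfold m1; infer_instance

lemma mm_eq (n : ℕ) : mm n = (volume.restrict (posOrth n)).withDensity (Wt n (fun _ => -1)) :=
  withDensity_indicator (measurableSet_posOrth n) _

lemma m1_eq : m1 = (volume.restrict (Ioi (0:ℝ))).withDensity (fun t => ENNReal.ofReal (t⁻¹)) :=
  withDensity_indicator measurableSet_Ioi _

lemma lintegral_mm (n : ℕ) {φ : (Fin n → ℝ) → ℝ≥0∞} (hφ : Measurable φ) :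
    ∫⁻ x, φ x ∂mm n = ∫⁻ x in posOrth n, Wt n (fun _ => -1) x * φ x := by
  rw [mm_eq, lintegral_withDensity_eq_lintegral_mul _ (measurable_Wt _ _) hφ]
  rfl

lemma lintegral_m1 {φ : ℝ → ℝ≥0∞} (hφ : Measurable φ) :
    ∫⁻ x, φ x ∂m1 = ∫⁻ t in Ioi (0:ℝ), ENNReal.ofReal (t⁻¹) * φ t := by
  rw [m1_eq, lintegral_withDensity_eq_lintegral_mul _ (by fun_prop) hφ]
  rfl

lemma ae_mm (n : ℕ) : ∀ᵐ x ∂mm n, x ∈ posOrth n := by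
  rw [mm_eq]
  exact withDensity_absolutelyContinuous _ _ (ae_restrict_mem (measurableSet_posOrth n))

lemma ae_m1 : ∀ᵐ x ∂m1, 0 < x := by
  rw [m1_eq]
  exact withDensity_absolutelyContinuous _ _ (ae_restrict_mem measurableSet_Ioi)

lemma vol_ac_mm (n : ℕ) : volume.restrict (posOrth n) ≪ mm n := by
  rw [mm_eq]
  refine withDensity_absolutelyContinuous' (measurable_Wt _ _).aemeasurable ?_
  filter_upwards [ae_restrict_mem (measurableSet_posOrth n)] with x hx using Wt_ne_zero _ hx

lemma mp_mm {n : ℕ} {p : Fin n → ℝ} (hp : p ∈ posOrth n) :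
    MeasurePreserving (fun x : Fin n → ℝ => fun i => p i * x i) (mm n) (mm n) := by
  have hpos : 0 < ∏ i, p i := Finset.prod_pos fun i _ => hp i
  have hm : Measurable (fun x : Fin n → ℝ => fun i => p i * x i) := by fun_prop
  have key := Real.smul_map_diagonal_volume_pi (D := p)
    (by rw [Matrix.det_diagonal]; exact hpos.ne')
  rw [Matrix.det_diagonal, abs_of_pos hpos] at key
  have e : (⇑(Matrix.toLin' (Matrix.diagonal p)) : (Fin n → ℝ) → (Fin n → ℝ))
      = fun x : Fin n → ℝ => fun i => p i * x i := by
    ext x i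
    simp [Matrix.mulVec_diagonal]
  rw [e] at key
  refine mp_gen volume _ hm _ key _ ((measurable_Wt _ _).indicator (measurableSet_posOrth n)) ?_
  intro x
  by_cases hx : x ∈ posOrth n
  · rw [indicator_of_mem hx, indicator_of_mem (posOrth_mul hp hx), Wt_mul _ hp hx, ← mul_assoc]
    have : ENNReal.ofReal (∏ i, p i) = Wt n (fun _ => 1) p := by simp [Wt]
    rw [this, Wt_add _ _ hp]
    simp [Wt]
  · rw [indicator_of_notMem hx, indicator_of_notMem, mul_zero]
    intro h
    apply hx
    intro i
    exact pos_of_mul_pos_right (h i) (hp i).le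

lemma mp_m1 {a : ℝ} (ha : 0 < a) : MeasurePreserving (fun x : ℝ => a * x) m1 m1 := by
  have key := Real.smul_map_volume_mul_left ha.ne'
  rw [abs_of_pos ha] at key
  refine mp_gen volume _ (by fun_prop) _ key _
    (Measurable.indicator (by fun_prop) measurableSet_Ioi) ?_
  intro x
  by_cases hx : 0 < x
  · rw [indicator_of_mem (show x ∈ Ioi 0 from hx), indicator_of_mem (show a * x ∈ Ioi 0 from mul_pos ha hx),
      ← ENNReal.ofReal_mul ha.le]
    congr 1
    field_simp
  · rw [indicator_of_notMem (show x ∉ Ioi 0 from hx), indicator_of_notMem, mul_zero]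
    intro h
    exact hx (pos_of_mul_pos_right h ha.le)

lemma young (n : ℕ) (K G : (Fin n → ℝ) → ℝ≥0∞) (hK : Measurable K) (hG : Measurable G)
    (r : ℝ) (hr : 1 ≤ r) :
    ∫⁻ p, (∫⁻ x, K (fun i => p i * x i) * G x ∂mm n) ^ r ∂mm n
      ≤ (∫⁻ x, K x ∂mm n) ^ r * ∫⁻ x, G x ^ r ∂mm n := by
  have hr0 : 0 < r := by linarith
  have hr1 : 0 ≤ 1 - 1 / r := by
    rw [sub_nonneg, div_le_one hr0]; exact hr
  have hr2 : 0 ≤ 1 / r := by positivity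
  set A := ∫⁻ x, K x ∂mm n with hA
  have hm2 : Measurable (fun z : (Fin n → ℝ) × (Fin n → ℝ) => (fun i => z.1 i * z.2 i)) := by
    fun_prop
  have hmu : Measurable (Function.uncurry fun p x : Fin n → ℝ => K (fun i => p i * x i) * G x ^ r) :=
    (hK.comp hm2).mul ((hG.comp measurable_snd).pow_const r)
  have step1 : ∀ᵐ p ∂mm n, (∫⁻ x, K (fun i => p i * x i) * G x ∂mm n) ^ r
      ≤ A ^ (r - 1) * ∫⁻ x, K (fun i => p i * x i) * G x ^ r ∂mm n := by
    filter_upwards [ae_mm n] with p hp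
    have hKp : Measurable fun x : Fin n → ℝ => K (fun i => p i * x i) :=
      hK.comp (mp_mm hp).measurable
    have h1 := ENNReal.lintegral_mul_norm_pow_le (μ := mm n)
      (f := fun x => K (fun i => p i * x i)) (g := fun x => K (fun i => p i * x i) * G x ^ r)
      hKp.aemeasurable (hKp.mul (hG.pow_const r)).aemeasurable hr1 hr2 (by ring)
    have h2 : ∀ x, K (fun i => p i * x i) ^ (1 - 1 / r) *
        (K (fun i => p i * x i) * G x ^ r) ^ (1 / r) = K (fun i => p i * x i) * G x := by
      intro x
      rw [ENNReal.mul_rpow_of_nonneg _ _ hr2, ← mul_assoc, ← ENNReal.rpow_add_of_nonneg _ _ hr1 hr2,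
        ← ENNReal.rpow_mul, mul_one_div_cancel hr0.ne', ENNReal.rpow_one, sub_add_cancel,
        ENNReal.rpow_one]
    simp_rw [h2] at h1
    rw [(mp_mm hp).lintegral_comp hK] at h1
    calc _ ≤ _ := ENNReal.rpow_le_rpow h1 hr0.le
      _ = _ := by
        rw [ENNReal.mul_rpow_of_nonneg _ _ hr0.le, ← ENNReal.rpow_mul, ← ENNReal.rpow_mul,
          one_div_mul_cancel hr0.ne', ENNReal.rpow_one]
        congr 2
        field_simp
  calc _ ≤ ∫⁻ p, A ^ (r - 1) * ∫⁻ x, K (fun i => p i * x i) * G x ^ r ∂mm n ∂mm n :=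
        lintegral_mono_ae step1
    _ = A ^ (r - 1) * ∫⁻ x, ∫⁻ p, K (fun i => p i * x i) * G x ^ r ∂mm n ∂mm n := by
        rw [lintegral_const_mul _ hmu.lintegral_prod_right, lintegral_lintegral_swap hmu.aemeasurable]
    _ = A ^ (r - 1) * ∫⁻ x, A * G x ^ r ∂mm n := by
        congr 1
        refine lintegral_congr_ae ?_
        filter_upwards [ae_mm n] with x hx
        have hKp : Measurable fun p : Fin n → ℝ => K (fun i => x i * p i) :=
          hK.comp (mp_mm hx).measurable
        simp_rw [mul_comm _ (x _)]
        rw [lintegral_mul_const _ hKp, (mp_mm hx).lintegral_comp hK]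
    _ = A ^ r * ∫⁻ x, G x ^ r ∂mm n := by
        rw [lintegral_const_mul _ (hG.pow_const r), ← mul_assoc]
        congr 1
        conv_lhs => rw [← ENNReal.rpow_one A, ← ENNReal.rpow_mul]
        rw [← ENNReal.rpow_add_of_nonneg _ _ (by linarith) zero_le_one]
        congr 1
        ring

lemma bil (n : ℕ) (q : (Fin n → ℝ) → ℝ) (hqm : Measurable q)
    (hqp : ∀ x ∈ posOrth n, 0 < q x)
    (hqh : ∀ lam : ℝ, 0 < lam → ∀ x ∈ posOrth n, q (fun i => lam * x i) = lam * q x)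
    (c : Fin n → ℝ) (g h : ℝ → ℝ≥0∞) (hg : Measurable g) (hh : Measurable h) :
    (∫⁻ s, g s * ENNReal.ofReal (s ^ (∑ i, c i)) ∂m1) * (∫⁻ x, h (q x) * Wt n c x ∂mm n)
      = (∫⁻ x, g (1 * (q x)⁻¹) * ENNReal.ofReal ((1 * (q x)⁻¹) ^ (∑ i, c i)) ^ 2 * Wt n c x ∂mm n) *
        ∫⁻ s, h s * ENNReal.ofReal (s ^ (∑ i, c i)) ∂m1 := by
  set α := ∑ i, c i with hα
  have hW : ∀ s : ℝ, 0 < s → ∀ x ∈ posOrth n,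
      Wt n c (fun i => s * x i) = ENNReal.ofReal (s ^ α) * Wt n c x := by
    intro s hs x hx
    rw [Wt_mul c (p := fun _ => s) (fun _ => hs) hx, Wt_const c hs]
  calc _ = ∫⁻ s, (g s * ENNReal.ofReal (s ^ α)) * (∫⁻ x, h (q x) * Wt n c x ∂mm n) ∂m1 := by
        rw [lintegral_mul_const _ (by fun_prop)]
    _ = ∫⁻ s, ∫⁻ x, (g s * ENNReal.ofReal (s ^ α)) *
          (h (s * q x) * (ENNReal.ofReal (s ^ α) * Wt n c x)) ∂mm n ∂m1 := by
        refine lintegral_congr_ae ?_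
        filter_upwards [ae_m1] with s hs
        rw [lintegral_const_mul _ (by fun_prop)]
        congr 1
        rw [← (mp_mm (n := n) (p := fun _ => s) (fun _ => hs)).lintegral_comp (by fun_prop)]
        refine lintegral_congr_ae ?_
        filter_upwards [ae_mm n] with x hx
        rw [hqh s hs x hx, hW s hs x hx]
    _ = ∫⁻ x, ∫⁻ s, (g s * ENNReal.ofReal (s ^ α)) *
          (h (s * q x) * (ENNReal.ofReal (s ^ α) * Wt n c x)) ∂m1 ∂mm n := by
        refine lintegral_lintegral_swap (Measurable.aemeasurable ?_)
        unfold Function.uncurry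
        fun_prop
    _ = ∫⁻ x, ∫⁻ s, g (s * (q x)⁻¹) * ENNReal.ofReal ((s * (q x)⁻¹) ^ α) ^ 2 * h s * Wt n c x
          ∂m1 ∂mm n := by
        refine lintegral_congr_ae ?_
        filter_upwards [ae_mm n] with x hx
        have hq := hqp x hx
        conv_rhs => rw [← (mp_m1 hq).lintegral_comp (by fun_prop)]
        refine lintegral_congr fun s => ?_
        have e : q x * s * (q x)⁻¹ = s := by field_simp
        rw [e, mul_comm (q x) s]
        ring
    _ = ∫⁻ s, ∫⁻ x, g (s * (q x)⁻¹) * ENNReal.ofReal ((s * (q x)⁻¹) ^ α) ^ 2 * h s * Wt n c x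
          ∂mm n ∂m1 := by
        refine lintegral_lintegral_swap (Measurable.aemeasurable ?_)
        unfold Function.uncurry
        fun_prop
    _ = ∫⁻ s, (∫⁻ x, g (1 * (q x)⁻¹) * ENNReal.ofReal ((1 * (q x)⁻¹) ^ α) ^ 2 * Wt n c x ∂mm n) *
          (h s * ENNReal.ofReal (s ^ α)) ∂m1 := by
        refine lintegral_congr_ae ?_
        filter_upwards [ae_m1] with s hs
        rw [← lintegral_mul_const _ (by fun_prop),
          ← (mp_mm (n := n) (p := fun _ => s) (fun _ => hs)).lintegral_comp (by fun_prop)]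
        refine lintegral_congr_ae ?_
        filter_upwards [ae_mm n] with x hx
        have hq := hqp x hx
        have e : s * (s * q x)⁻¹ = 1 * (q x)⁻¹ := by field_simp
        rw [hqh s hs x hx, hW s hs x hx, e]
        ring
    _ = _ := by rw [lintegral_const_mul _ (by fun_prop)]

lemma m1_pow (α : ℝ) (h : ℝ → ℝ≥0∞) (hh : Measurable h) :
    ∫⁻ s, h s * ENNReal.ofReal (s ^ α) ∂m1
      = ∫⁻ t in Ioi (0:ℝ), h t * ENNReal.ofReal (t ^ (α - 1)) := by
  rw [lintegral_m1 (by fun_prop)]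
  refine setLIntegral_congr_fun measurableSet_Ioi fun t ht => ?_
  have ht : 0 < t := ht
  rw [Real.rpow_sub_one ht.ne', div_eq_mul_inv, ENNReal.ofReal_mul (Real.rpow_nonneg ht.le _)]
  ring

lemma polar (n : ℕ) (q : (Fin n → ℝ) → ℝ) (hqm : Measurable q)
    (hqp : ∀ x ∈ posOrth n, 0 < q x)
    (hqh : ∀ lam : ℝ, 0 < lam → ∀ x ∈ posOrth n, q (fun i => lam * x i) = lam * q x)
    (c : Fin n → ℝ) (hα : 0 < ∑ i, c i) (h : ℝ → ℝ≥0∞) (hh : Measurable h) :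
    ENNReal.ofReal (Real.Gamma (∑ i, c i)) * (∫⁻ x, h (q x) * Wt n c x ∂mm n)
      = (∫⁻ x, ENNReal.ofReal (Real.exp (-q x)) * Wt n c x ∂mm n) *
        ∫⁻ t in Ioi (0:ℝ), h t * ENNReal.ofReal (t ^ (∑ i, c i - 1)) := by
  set g : ℝ → ℝ≥0∞ := fun t => ENNReal.ofReal (Real.exp (-t)) with hg
  have hgm : Measurable g := by fun_prop
  have hG : ∫⁻ s, g s * ENNReal.ofReal (s ^ (∑ i, c i)) ∂m1
      = ENNReal.ofReal (Real.Gamma (∑ i, c i)) := by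
    rw [m1_pow _ _ hgm, Real.Gamma_eq_integral hα,
      ofReal_integral_eq_lintegral_ofReal (Real.GammaIntegral_convergent hα)]
    · refine setLIntegral_congr_fun measurableSet_Ioi fun t ht => ?_
      exact (ENNReal.ofReal_mul (Real.exp_pos _).le).symm
    · filter_upwards [ae_restrict_mem measurableSet_Ioi] with t ht
      exact mul_nonneg (Real.exp_pos _).le (Real.rpow_nonneg (le_of_lt ht) _)
  have b1 := bil n q hqm hqp hqh c g g hgm hgm
  have b2 := bil n q hqm hqp hqh c g h hgm hh
  rw [hG, mul_comm] at b1
  have h0 : ENNReal.ofReal (Real.Gamma (∑ i, c i)) ≠ 0 := by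
    rw [Ne, ENNReal.ofReal_eq_zero, not_le]; exact Real.Gamma_pos_of_pos hα
  rw [ENNReal.mul_left_inj h0 ENNReal.ofReal_ne_top] at b1
  rw [hG, ← b1, m1_pow _ _ hh] at b2
  exact b2

lemma exp_fin (n : ℕ) (q : (Fin n → ℝ) → ℝ) (hq : IsCostFun n q)
    (c : Fin n → ℝ) (hc : ∀ i, 0 < c i) :
    IntegrableOn (fun x => Real.exp (-q x) * ∏ i, x i ^ (c i - 1)) (posOrth n) := by
  obtain ⟨h1, h2, h3, h4⟩ := hq
  obtain ⟨M, hM0, hM⟩ := (h4 1).exists_pos_norm_le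
  have hb : ∀ x ∈ posOrth n, ‖x‖ ≤ M * q x := by
    intro x hx
    have hqx := h2 x hx
    have hy := hM (fun i => (q x)⁻¹ * x i) ⟨fun i => mul_pos (inv_pos.2 hqx) (hx i), by
      rw [h3 _ (inv_pos.2 hqx) x hx]; exact inv_mul_cancel₀ hqx.ne'⟩
    have e : (fun i => (q x)⁻¹ * x i) = (q x)⁻¹ • x := rfl
    rw [e, norm_smul, norm_inv, Real.norm_of_nonneg hqx.le, inv_mul_le_iff₀ hqx] at hy
    linarith
  set b : ℝ := 1 / ((n + 1) * M) with hbdef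
  have hb0 : 0 < b := by positivity
  have hsum : ∀ x ∈ posOrth n, ∑ i, b * x i ≤ q x := by
    intro x hx
    have h5 : ∑ i, x i ≤ n * ‖x‖ := by
      calc ∑ i, x i ≤ ∑ i : Fin n, ‖x‖ :=
            Finset.sum_le_sum fun i _ => (le_abs_self _).trans (norm_le_pi_norm x i)
        _ = _ := by simp
    rw [← Finset.mul_sum, hbdef, one_div, inv_mul_le_iff₀ (by positivity)]
    have := hb x hx
    have h6 := norm_nonneg x
    have h7 : (n : ℝ) * ‖x‖ ≤ (n + 1) * ‖x‖ := by nlinarith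
    have h8 : ((n : ℝ) + 1) * ‖x‖ ≤ (n + 1) * (M * q x) := by gcongr
    linarith
  have hint : Integrable (fun x : Fin n → ℝ => ∏ i, (x i ^ (c i - 1) * Real.exp (-b * x i)))
      (volume.restrict (posOrth n)) := by
    have e : posOrth n = Set.univ.pi fun _ => Ioi (0:ℝ) := by ext; simp [posOrth]
    rw [e, volume_pi, Measure.restrict_pi_pi]
    refine Integrable.fintype_prod (f := fun i (t : ℝ) => t ^ (c i - 1) * Real.exp (-b * t)) ?_
    intro i
    have := integrableOn_rpow_mul_exp_neg_mul_rpow (p := 1) (s := c i - 1) (b := b)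
      (by linarith [hc i]) one_pos hb0
    simpa [IntegrableOn] using this
  refine hint.mono' ?_ ?_
  · refine AEStronglyMeasurable.mul ?_ ?_
    · refine ContinuousOn.aestronglyMeasurable ?_ (measurableSet_posOrth n)
      exact Real.continuous_exp.comp_continuousOn h1.continuousOn.neg
    · exact (by fun_prop : Measurable fun x : Fin n → ℝ => ∏ i, x i ^ (c i - 1)).aestronglyMeasurable
  · filter_upwards [ae_restrict_mem (measurableSet_posOrth n)] with x hx
    have hP : 0 ≤ ∏ i, x i ^ (c i - 1) :=
      Finset.prod_nonneg fun i _ => Real.rpow_nonneg (hx i).le _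
    rw [Real.norm_of_nonneg (mul_nonneg (Real.exp_pos _).le hP), Finset.prod_mul_distrib,
      ← Real.exp_sum, mul_comm]
    gcongr
    have := hsum x hx
    simp only [neg_mul, Finset.sum_neg_distrib]
    linarith

lemma core (n : ℕ) (q : (Fin n → ℝ) → ℝ) (hqm : Measurable q) (c : Fin n → ℝ)
    (h : ℝ → ℝ) (hh : Measurable h) (f : (Fin n → ℝ) → ℝ) (hf : Measurable f)
    (r : ℝ) (hr : 1 ≤ r) :
    ∫⁻ p in posOrth n, (∫⁻ x in posOrth n, ‖h (q (fun i => p i * x i)) * f x‖ₑ) ^ r *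
        Wt n (fun i => r * c i - 1) p
      ≤ (∫⁻ x, ‖h (q x)‖ₑ * Wt n c x ∂mm n) ^ r *
        ∫⁻ x in posOrth n, ‖f x‖ₑ ^ r * Wt n (fun i => r * (1 - c i) - 1) x := by
  have hr0 : 0 ≤ r := by linarith
  have hm2 : Measurable (fun z : (Fin n → ℝ) × (Fin n → ℝ) => (fun i => z.1 i * z.2 i)) := by
    fun_prop
  set K : (Fin n → ℝ) → ℝ≥0∞ := fun x => ‖h (q x)‖ₑ * Wt n c x with hK
  set G : (Fin n → ℝ) → ℝ≥0∞ := fun x => ‖f x‖ₑ * Wt n (fun i => 1 - c i) x with hG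
  have hKm : Measurable K := by fun_prop
  have hGm : Measurable G := by fun_prop
  have hJ : Measurable (Function.uncurry fun p x : Fin n → ℝ => K (fun i => p i * x i) * G x) :=
    (hKm.comp hm2).mul (hGm.comp measurable_snd)
  have hY := young n K G hKm hGm r hr
  have e1 : ∫⁻ x, G x ^ r ∂mm n
      = ∫⁻ x in posOrth n, ‖f x‖ₑ ^ r * Wt n (fun i => r * (1 - c i) - 1) x := by
    rw [lintegral_mm n (hGm.pow_const r)]
    refine setLIntegral_congr_fun (measurableSet_posOrth n) fun x hx => ?_
    simp only [hG]
    rw [ENNReal.mul_rpow_of_nonneg _ _ hr0, Wt_rpow _ _ hr0 hx, mul_left_comm, Wt_add _ _ hx]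
    simp only [neg_add_eq_sub]
  have e2 : ∫⁻ p, (∫⁻ x, K (fun i => p i * x i) * G x ∂mm n) ^ r ∂mm n
      = ∫⁻ p in posOrth n, (∫⁻ x in posOrth n, ‖h (q (fun i => p i * x i)) * f x‖ₑ) ^ r *
        Wt n (fun i => r * c i - 1) p := by
    rw [lintegral_mm n (hJ.lintegral_prod_right.pow_const r)]
    refine setLIntegral_congr_fun (measurableSet_posOrth n) fun p hp => ?_
    have hpm : Measurable (fun x : Fin n → ℝ => (fun i => p i * x i)) := by fun_prop
    have hhm : Measurable fun x : Fin n → ℝ => ‖h (q (fun i => p i * x i)) * f x‖ₑ :=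
      ((hh.comp (hqm.comp hpm)).mul hf).enorm
    have e3 : ∫⁻ x, K (fun i => p i * x i) * G x ∂mm n
        = Wt n c p * ∫⁻ x in posOrth n, ‖h (q (fun i => p i * x i)) * f x‖ₑ := by
      rw [lintegral_mm n (φ := fun x => K (fun i => p i * x i) * G x) ((hKm.comp hpm).mul hGm), ← lintegral_const_mul _ hhm]
      refine setLIntegral_congr_fun (measurableSet_posOrth n) fun x hx => ?_
      simp only [hG, hK]
      rw [Wt_mul c hp hx, enorm_mul]
      have e4 : Wt n (fun _ => -1) x * Wt n c x * Wt n (fun i => 1 - c i) x = 1 := by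
        rw [Wt_add _ _ hx, Wt_add _ _ hx]
        simp [Wt]
      calc _ = Wt n c p * (‖h (q (fun i => p i * x i))‖ₑ * ‖f x‖ₑ) *
            (Wt n (fun _ => -1) x * Wt n c x * Wt n (fun i => 1 - c i) x) := by ring
        _ = _ := by rw [e4, mul_one]
    simp only [e3]
    rw [ENNReal.mul_rpow_of_nonneg _ _ hr0, Wt_rpow _ _ hr0 hp, ← mul_assoc, Wt_add _ _ hp, mul_comm]
    simp only [neg_add_eq_sub]
  rw [e1, e2] at hY
  exact hY

lemma ofReal_weight (n : ℕ) (r : ℝ) (hr : 0 ≤ r) (y : ℝ) (a : Fin n → ℝ) (x : Fin n → ℝ) :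
    ENNReal.ofReal (|y| ^ r * ∏ i, x i ^ (a i)) = ‖y‖ₑ ^ r * Wt n a x := by
  rw [ENNReal.ofReal_mul (Real.rpow_nonneg (abs_nonneg _) _), ← Real.norm_eq_abs,
    ← ENNReal.ofReal_rpow_of_nonneg (norm_nonneg _) hr, ofReal_norm]
  rfl

lemma prod_nn {n : ℕ} (a : Fin n → ℝ) {x : Fin n → ℝ} (hx : x ∈ posOrth n) :
    0 ≤ ∏ i, x i ^ (a i) := Finset.prod_nonneg fun i _ => Real.rpow_nonneg (hx i).le _

lemma Rhq_meas (n : ℕ) (q : (Fin n → ℝ) → ℝ) (hqm : Measurable q)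
    (h : ℝ → ℝ) (hh : Measurable h) (f : (Fin n → ℝ) → ℝ) (hf : Measurable f) :
    StronglyMeasurable (Rhq n q h f) := by
  have hm2 : Measurable (fun z : (Fin n → ℝ) × (Fin n → ℝ) => (fun i => z.1 i * z.2 i)) := by
    fun_prop
  have : Measurable (Function.uncurry fun p x : Fin n → ℝ => h (q (fun i => p i * x i)) * f x) :=
    (hh.comp (hqm.comp hm2)).mul (hf.comp measurable_snd)
  exact this.stronglyMeasurable.integral_prod_right

lemma meas_indicator {n : ℕ} {f : (Fin n → ℝ) → ℝ} (hf : ContinuousOn f (posOrth n)) :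
    Measurable ((posOrth n).indicator f) := by
  classical
  rw [← piecewise_eq_indicator]
  exact hf.measurable_piecewise continuousOn_const (measurableSet_posOrth n)

/-- Estimate: `‖R^h_q f‖_{r,c} ≤ Γ(α)⁻¹ ‖e^{-q}‖_{1,c} ‖h‖_{1,α} ‖f‖_{r,I-c}` for
`f ∈ L^r_{I-c}(ℝ^n_+) ∩ C(ℝ^n_+)`; in particular `R^h_q f ∈ L^r_c(ℝ^n_+)`. -/
theorem norm_Rhq_le
    (n : ℕ) (hn : 2 ≤ n) (q : (Fin n → ℝ) → ℝ) (hq : IsCostFun n q)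
    (c : Fin n → ℝ) (hc : ∀ i, 0 < c i) (α : ℝ) (hα : α = ∑ i, c i)
    (r : ℝ) (hr : 1 ≤ r)
    (h : ℝ → ℝ) (hh : MemL1w1 α h)
    (f : (Fin n → ℝ) → ℝ) (hf : MemLrw n r (fun i => 1 - c i) f)
    (hfc : ContinuousOn f (posOrth n)) :
    normLrw n r c (Rhq n q h f) ≤
        (Real.Gamma α)⁻¹ * (∫ x in posOrth n, Real.exp (-q x) * ∏ i, x i ^ (c i - 1)) *
          normL1w1 α h * normLrw n r (fun i => 1 - c i) f ∧
      MemLrw n r c (Rhq n q h f) := by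
  have hr0 : 0 < r := by linarith
  have hαp : 0 < ∑ i, c i :=
    Finset.sum_pos (fun i _ => hc i) ⟨⟨0, by omega⟩, Finset.mem_univ _⟩
  subst hα
  have hmO := measurableSet_posOrth n
  have hEint := exp_fin n q hq c hc
  obtain ⟨hq1, hq2, hq3, -⟩ := hq
  set q' := (posOrth n).indicator q with hq'
  set f' := (posOrth n).indicator f with hf'
  have hqm : Measurable q' := meas_indicator hq1.continuousOn
  have hfm : Measurable f' := meas_indicator hfc
  have qq : ∀ x ∈ posOrth n, q' x = q x := fun x hx => indicator_of_mem hx _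
  have ff : ∀ x ∈ posOrth n, f' x = f x := fun x hx => indicator_of_mem hx _
  have hqp : ∀ x ∈ posOrth n, 0 < q' x := fun x hx => by rw [qq x hx]; exact hq2 x hx
  have hqh : ∀ lam : ℝ, 0 < lam → ∀ x ∈ posOrth n, q' (fun i => lam * x i) = lam * q' x := by
    intro lam hl x hx
    rw [qq x hx, qq _ (fun i => mul_pos hl (hx i)), hq3 lam hl x hx]
  have hpol := polar n q' hqm hqp hqh c hαp
  set α := ∑ i, c i with hα
  -- constants
  set E := ∫⁻ x, ENNReal.ofReal (Real.exp (-q' x)) * Wt n c x ∂mm n with hE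
  have hEeq : E = ENNReal.ofReal (∫ x in posOrth n, Real.exp (-q x) * ∏ i, x i ^ (c i - 1)) := by
    rw [ofReal_integral_eq_lintegral_ofReal hEint, hE, lintegral_mm n (by fun_prop)]
    · refine setLIntegral_congr_fun hmO fun x hx => ?_
      rw [qq x hx, ENNReal.ofReal_mul (Real.exp_pos _).le, mul_left_comm, Wt_add _ _ hx]
      simp only [neg_add_eq_sub]
      rfl
    · filter_upwards [ae_restrict_mem hmO] with x hx
      exact mul_nonneg (Real.exp_pos _).le (prod_nn (fun i => c i - 1) hx)
  have hΓ : 0 < Real.Gamma α := Real.Gamma_pos_of_pos hαp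
  have hΓ0 : ENNReal.ofReal (Real.Gamma α) ≠ 0 := by
    rw [Ne, ENNReal.ofReal_eq_zero, not_le]; exact hΓ
  -- measurable version of h
  have hham : AEStronglyMeasurable h (volume.restrict (Ioi (0:ℝ))) := by
    have h1 : AEStronglyMeasurable (fun t : ℝ => h t * t ^ (α - 1) * t ^ (1 - α))
        (volume.restrict (Ioi (0:ℝ))) :=
      hh.1.mul (by fun_prop : Measurable fun t : ℝ => t ^ (1 - α)).aestronglyMeasurable
    refine h1.congr ?_
    filter_upwards [ae_restrict_mem measurableSet_Ioi] with t ht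
    have ht : 0 < t := ht
    rw [mul_assoc, ← Real.rpow_add ht]
    simp
  set h' := hham.mk h with hh'
  have hhm : Measurable h' := hham.stronglyMeasurable_mk.measurable
  have hhe : h =ᵐ[volume.restrict (Ioi (0:ℝ))] h' := hham.ae_eq_mk
  set H := ∫⁻ t in Ioi (0:ℝ), ‖h' t‖ₑ * ENNReal.ofReal (t ^ (α - 1)) with hH
  have hHint : IntegrableOn (fun t : ℝ => |h t| * t ^ (α - 1)) (Ioi (0:ℝ)) := by
    refine hh.norm.congr ?_
    filter_upwards [ae_restrict_mem measurableSet_Ioi] with t ht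
    have ht : 0 < t := ht
    rw [norm_mul, Real.norm_eq_abs, Real.norm_of_nonneg (Real.rpow_nonneg ht.le _)]
  have hHeq : H = ENNReal.ofReal (normL1w1 α h) := by
    unfold normL1w1
    rw [ofReal_integral_eq_lintegral_ofReal hHint, hH]
    · refine lintegral_congr_ae ?_
      filter_upwards [hhe] with t ht
      rw [← ht, ENNReal.ofReal_mul (abs_nonneg _), ← Real.norm_eq_abs, ofReal_norm]
    · filter_upwards [ae_restrict_mem measurableSet_Ioi] with t ht
      have ht : 0 < t := ht
      exact mul_nonneg (abs_nonneg _) (Real.rpow_nonneg ht.le _)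
  -- absolute continuity
  have hac : (mm n).map q' ≪ volume.restrict (Ioi (0:ℝ)) := by
    refine Measure.AbsolutelyContinuous.mk fun s hs hs0 => ?_
    have h1 := hpol (s.indicator 1) (measurable_one.indicator hs)
    have h2 : ∫⁻ t in Ioi (0:ℝ), s.indicator 1 t * ENNReal.ofReal (t ^ (α - 1)) = 0 := by
      rw [lintegral_eq_zero_iff
        (f := fun t => s.indicator 1 t * ENNReal.ofReal (t ^ (α - 1)))
        (Measurable.mul (measurable_one.indicator hs) (by fun_prop))]
      have : ∀ᵐ t ∂(volume.restrict (Ioi (0:ℝ))), t ∉ s := measure_eq_zero_iff_ae_notMem.1 hs0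
      filter_upwards [this] with t ht
      simp [ht]
    rw [h2, mul_zero, mul_eq_zero, or_iff_right hΓ0, lintegral_eq_zero_iff
      (f := fun x => s.indicator 1 (q' x) * Wt n c x) (((measurable_one.indicator hs).comp hqm).mul (measurable_Wt _ _))] at h1
    rw [Measure.map_apply hqm hs, measure_eq_zero_iff_ae_notMem]
    filter_upwards [h1, ae_mm n] with x hx hxp hxs
    have hxs : q' x ∈ s := hxs
    simp [hxs, Wt_ne_zero c hxp] at hx
  have hqmp : Measure.QuasiMeasurePreserving q' (mm n) (volume.restrict (Ioi (0:ℝ))) := ⟨hqm, hac⟩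
  -- replacing
  have hRR : ∀ p ∈ posOrth n, Rhq n q h f p = Rhq n q' h' f' p := by
    intro p hp
    unfold Rhq
    refine integral_congr_ae ?_
    have h1 := (hqmp.comp (mp_mm hp).quasiMeasurePreserving).ae hhe
    filter_upwards [vol_ac_mm n h1, ae_restrict_mem hmO] with x hx hxp
    rw [ff x hxp, ← qq _ (posOrth_mul hp hxp)]
    have hx : h (q' fun i => p i * x i) = h' (q' fun i => p i * x i) := hx
    rw [hx]
  have hRm : AEStronglyMeasurable (Rhq n q h f) (volume.restrict (posOrth n)) := by
    refine (Rhq_meas n q' hqm h' hhm f' hfm).aestronglyMeasurable.congr ?_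
    filter_upwards [ae_restrict_mem hmO] with p hp using (hRR p hp).symm
  -- main estimate
  set A := ∫⁻ x, ‖h' (q' x)‖ₑ * Wt n c x ∂mm n with hA
  have hAeq : A = ENNReal.ofReal ((Real.Gamma α)⁻¹ *
      (∫ x in posOrth n, Real.exp (-q x) * ∏ i, x i ^ (c i - 1)) * normL1w1 α h) := by
    have h1 := hpol (fun t => ‖h' t‖ₑ) hhm.enorm
    have hE0 : 0 ≤ ∫ x in posOrth n, Real.exp (-q x) * ∏ i, x i ^ (c i - 1) :=
      setIntegral_nonneg hmO fun x hx =>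
        mul_nonneg (Real.exp_pos _).le (prod_nn (fun i => c i - 1) hx)
    rw [mul_assoc, ENNReal.ofReal_mul (inv_nonneg.2 hΓ.le), ENNReal.ofReal_mul hE0, ← hEeq, ← hHeq]
    rw [← h1, ← mul_assoc, ENNReal.ofReal_inv_of_pos hΓ,
      ENNReal.inv_mul_cancel hΓ0 ENNReal.ofReal_ne_top, one_mul]
  have hB0 : 0 ≤ (Real.Gamma α)⁻¹ *
      (∫ x in posOrth n, Real.exp (-q x) * ∏ i, x i ^ (c i - 1)) * normL1w1 α h := by
    refine mul_nonneg (mul_nonneg (inv_nonneg.2 hΓ.le) ?_) ?_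
    · exact setIntegral_nonneg hmO fun x hx =>
        mul_nonneg (Real.exp_pos _).le (prod_nn (fun i => c i - 1) hx)
    · exact setIntegral_nonneg measurableSet_Ioi fun t ht =>
        mul_nonneg (abs_nonneg _) (Real.rpow_nonneg (le_of_lt ht) _)
  set B := (Real.Gamma α)⁻¹ *
      (∫ x in posOrth n, Real.exp (-q x) * ∏ i, x i ^ (c i - 1)) * normL1w1 α h with hB
  have hF0 : 0 ≤ ∫ x in posOrth n, |f x| ^ r * ∏ i, x i ^ (r * (1 - c i) - 1) :=
    setIntegral_nonneg hmO fun x hx => mul_nonneg (Real.rpow_nonneg (abs_nonneg _) _)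
      (prod_nn (fun i => r * (1 - c i) - 1) hx)
  have hF : ∫⁻ x in posOrth n, ‖f' x‖ₑ ^ r * Wt n (fun i => r * (1 - c i) - 1) x
      = ENNReal.ofReal (∫ x in posOrth n, |f x| ^ r * ∏ i, x i ^ (r * (1 - c i) - 1)) := by
    rw [ofReal_integral_eq_lintegral_ofReal hf.2]
    · refine setLIntegral_congr_fun hmO fun x hx => ?_
      rw [ff x hx, ofReal_weight n r hr0.le]
    · filter_upwards [ae_restrict_mem hmO] with x hx
      exact mul_nonneg (Real.rpow_nonneg (abs_nonneg _) _)
        (prod_nn (fun i => r * (1 - c i) - 1) hx)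
  set F := ∫ x in posOrth n, |f x| ^ r * ∏ i, x i ^ (r * (1 - c i) - 1) with hFdef
  have hmain : ∫⁻ p in posOrth n, ENNReal.ofReal (|Rhq n q h f p| ^ r * ∏ i, p i ^ (r * c i - 1))
      ≤ ENNReal.ofReal (B ^ r * F) := by
    have hcore := core n q' hqm c h' hhm f' hfm r hr
    rw [hF, ← hA, hAeq, ENNReal.ofReal_rpow_of_nonneg hB0 hr0.le,
      ← ENNReal.ofReal_mul (Real.rpow_nonneg hB0 _)] at hcore
    refine le_trans (setLIntegral_mono' hmO fun p hp => ?_) hcore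
    rw [ofReal_weight n r hr0.le, hRR p hp]
    gcongr
    exact enorm_integral_le_lintegral_enorm _
  have hnn : 0 ≤ᵐ[volume.restrict (posOrth n)]
      fun p => |Rhq n q h f p| ^ r * ∏ i, p i ^ (r * c i - 1) := by
    filter_upwards [ae_restrict_mem hmO] with x hx
    exact mul_nonneg (Real.rpow_nonneg (abs_nonneg _) _) (prod_nn (fun i => r * c i - 1) hx)
  have hmeas : AEStronglyMeasurable (fun p => |Rhq n q h f p| ^ r * ∏ i, p i ^ (r * c i - 1))
      (volume.restrict (posOrth n)) := by
    refine AEStronglyMeasurable.mul ?_ ?_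
    · exact (hRm.aemeasurable.norm.pow_const r).aestronglyMeasurable
    · exact (by fun_prop : Measurable fun x : Fin n → ℝ =>
        ∏ i, x i ^ (r * c i - 1)).aestronglyMeasurable
  refine ⟨?_, hRm, hmeas, ?_⟩
  · unfold normLrw
    rw [integral_eq_lintegral_of_nonneg_ae hnn hmeas, ← hFdef]
    have h1 := ENNReal.toReal_le_of_le_ofReal (mul_nonneg (Real.rpow_nonneg hB0 r) hF0) hmain
    calc _ ≤ (B ^ r * F) ^ (1 / r) :=
          Real.rpow_le_rpow ENNReal.toReal_nonneg h1 (by positivity)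
      _ = B * F ^ (1 / r) := by
          rw [Real.mul_rpow (Real.rpow_nonneg hB0 _) hF0, ← Real.rpow_mul hB0,
            mul_one_div_cancel hr0.ne', Real.rpow_one]
  · rw [hasFiniteIntegral_iff_ofReal hnn]
    exact hmain.trans_lt ENNReal.ofReal_lt_top
end
end

section
/- Let n ≥ 2, let q : ℝ^n_+ → ℝ satisfy the cost-function conditions, let c ∈ ℝ^n_+, set α = c_1 + ⋯ + c_n, and let h ∈ L^1_α(ℝ^1_+). Then for every x ∈ ℝ^n_+ and every z ∈ ℂ^n with Re z = c, writing s = z_1 + ⋯ + z_n, one has Γ(s) · ∫_{ℝ^n_+} p^{z−I} h(q(p_1x_1,…,p_nx_n)) dp = x^{−z} · (∫_{ℝ^n_+} p^{z−I} e^{−q(p)} dp) · (∫_0^∞ t^{s−1} h(t) dt), where Γ is the Gamma function. -/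
open MeasureTheory Complex Set

noncomputable section

lemma aux_expimage (n : ℕ) :
    (fun y : Fin n → ℝ => fun i => Real.exp (y i)) '' univ = posOrth n := by
  ext p
  simp only [image_univ, mem_range, posOrth, mem_ofPred_eq]
  constructor
  · rintro ⟨y, rfl⟩ i
    exact Real.exp_pos _
  · intro hp
    exact ⟨fun i => Real.log (p i), funext fun i => Real.exp_log (hp i)⟩

lemma aux_cov (n : ℕ) (F : (Fin n → ℝ) → ℂ) :
    ∫ p in posOrth n, F p
      = ∫ y : Fin n → ℝ, (∏ i, Real.exp (y i)) • F (fun i => Real.exp (y i)) := by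
  rw [← aux_expimage]
  have hd : ∀ y ∈ (univ : Set (Fin n → ℝ)), HasFDerivWithinAt
      (fun y : Fin n → ℝ => fun i => Real.exp (y i))
      (LinearMap.toContinuousLinearMap (Matrix.toLin' (Matrix.diagonal fun i => Real.exp (y i))))
      univ y := by
    intro y _
    rw [hasFDerivWithinAt_univ, hasFDerivAt_pi']
    intro i
    have h1 : HasFDerivAt (fun y : Fin n → ℝ => y i)
        (ContinuousLinearMap.proj (R := ℝ) (φ := fun _ : Fin n => ℝ) i) y := hasFDerivAt_apply i y
    have h2 := h1.exp
    have e : ((ContinuousLinearMap.proj (R := ℝ) (φ := fun _ : Fin n => ℝ) i).comp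
        (LinearMap.toContinuousLinearMap
          (Matrix.toLin' (Matrix.diagonal fun i => Real.exp (y i))))) =
        Real.exp (y i) • ContinuousLinearMap.proj (R := ℝ) (φ := fun _ : Fin n => ℝ) i := by
      apply ContinuousLinearMap.ext
      intro v
      simp [Matrix.mulVec_diagonal]
    exact e ▸ h2
  have hinj : InjOn (fun y : Fin n → ℝ => fun i => Real.exp (y i)) univ := by
    intro a _ b _ hab
    funext i
    exact Real.exp_injective (congrFun hab i)
  rw [integral_image_eq_integral_abs_det_fderiv_smul volume MeasurableSet.univ hd hinj]
  rw [Measure.restrict_univ]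
  congr 1
  funext y
  congr 1
  rw [LinearMap.det_toContinuousLinearMap, LinearMap.det_toLin', Matrix.det_diagonal]
  exact abs_of_pos (Finset.prod_pos fun i _ => Real.exp_pos _)

lemma aux_cov1 (F : ℝ → ℂ) :
    ∫ t in Ioi (0 : ℝ), F t = ∫ y : ℝ, (Real.exp y) • F (Real.exp y) := by
  have hr : Real.exp '' univ = Ioi 0 := by rw [image_univ, Real.range_exp]
  rw [← hr, integral_image_eq_integral_abs_deriv_smul MeasurableSet.univ
    (fun y _ => (Real.hasDerivAt_exp y).hasDerivWithinAt) Real.exp_injective.injOn,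
    Measure.restrict_univ]
  simp [abs_of_pos (Real.exp_pos _)]

lemma aux_cpow (y : ℝ) (w : ℂ) : ((Real.exp y : ℝ) : ℂ) ^ w = cexp (y * w) := by
  rw [Complex.cpow_def_of_ne_zero (by exact_mod_cast (Real.exp_pos y).ne'),
    ← Complex.ofReal_log (Real.exp_pos y).le, Real.log_exp]

lemma aux_pow (n : ℕ) (z : Fin n → ℂ) (y : Fin n → ℝ) (a : ℂ) :
    (∏ i, Real.exp (y i)) • ((∏ i, ((Real.exp (y i) : ℝ) : ℂ) ^ (z i - 1)) * a)
      = cexp (∑ i, y i * z i) * a := by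
  rw [Complex.real_smul, ← mul_assoc, Complex.ofReal_prod, ← Finset.prod_mul_distrib,
    Complex.exp_sum]
  congr 1
  refine Finset.prod_congr rfl fun i _ => ?_
  rw [aux_cpow, Complex.ofReal_exp, ← Complex.exp_add]
  congr 1
  ring

lemma aux_pow1 (s : ℂ) (y : ℝ) (a : ℂ) :
    Real.exp y • (((Real.exp y : ℝ) : ℂ) ^ (s - 1) * a) = cexp (y * s) * a := by
  rw [Complex.real_smul, ← mul_assoc]
  congr 1
  rw [aux_cpow, Complex.ofReal_exp, ← Complex.exp_add]
  congr 1
  ring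

/-- The involution in logarithmic coordinates. -/
def auxT (n : ℕ) (Q : (Fin n → ℝ) → ℝ) (w : (Fin n → ℝ) × ℝ) : (Fin n → ℝ) × ℝ :=
  (w.1 + (fun _ => w.2 - Q w.1), Q w.1)

lemma auxT_mp (n : ℕ) (Q : (Fin n → ℝ) → ℝ) (hQ : Measurable Q)
    (hl : ∀ y (l : ℝ), Q (y + fun _ => l) = Q y + l) :
    MeasurePreserving (auxT n Q) (volume : Measure ((Fin n → ℝ) × ℝ)) volume := by
  have S1 : MeasurePreserving (fun w : (Fin n → ℝ) × ℝ => (w.1, w.2 - Q w.1))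
      (volume.prod volume) (volume.prod volume) :=
    (MeasurePreserving.id volume).skew_product (g := fun a b => b - Q a)
      (by unfold Function.uncurry; fun_prop)
      (Filter.Eventually.of_forall fun a => (measurePreserving_sub_right volume (Q a)).map_eq)
  have S4 : MeasurePreserving (fun w : (Fin n → ℝ) × ℝ => (w.1, w.2 + Q w.1))
      (volume.prod volume) (volume.prod volume) :=
    (MeasurePreserving.id volume).skew_product (g := fun a b => b + Q a)
      (by unfold Function.uncurry; fun_prop)
      (Filter.Eventually.of_forall fun a => (measurePreserving_add_right volume (Q a)).map_eq)
  have S2 : MeasurePreserving (fun w : ℝ × (Fin n → ℝ) => (-w.1, w.2 + fun _ => w.1))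
      (volume.prod volume) (volume.prod volume) :=
    (Measure.measurePreserving_neg (volume : Measure ℝ)).skew_product
      (g := fun a (b : Fin n → ℝ) => b + fun _ => a)
      (by unfold Function.uncurry; fun_prop)
      (Filter.Eventually.of_forall fun a =>
        (measurePreserving_add_right (volume : Measure (Fin n → ℝ)) (fun _ => a)).map_eq)
  have sw1 := Measure.measurePreserving_swap (μ := (volume : Measure (Fin n → ℝ)))
    (ν := (volume : Measure ℝ))
  have sw2 := Measure.measurePreserving_swap (ν := (volume : Measure (Fin n → ℝ)))
    (μ := (volume : Measure ℝ))
  have := S4.comp (sw2.comp (S2.comp (sw1.comp S1)))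
  have e : auxT n Q = ((fun w : (Fin n → ℝ) × ℝ => (w.1, w.2 + Q w.1)) ∘ Prod.swap ∘
      (fun w : ℝ × (Fin n → ℝ) => (-w.1, w.2 + fun _ => w.1)) ∘ Prod.swap ∘
      fun w : (Fin n → ℝ) × ℝ => (w.1, w.2 - Q w.1)) := by
    funext w
    simp [auxT, hl]
  rw [e]
  exact this

lemma auxT_invol (n : ℕ) (Q : (Fin n → ℝ) → ℝ)
    (hl : ∀ y (l : ℝ), Q (y + fun _ => l) = Q y + l) (w) : auxT n Q (auxT n Q w) = w := by
  ext <;> simp [auxT, hl] <;> ring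

lemma aux_symm (n : ℕ) (Q : (Fin n → ℝ) → ℝ) (hQ : Measurable Q)
    (hl : ∀ y (l : ℝ), Q (y + fun _ => l) = Q y + l) (z : Fin n → ℂ) (f g : ℝ → ℂ) :
    (∫ y : Fin n → ℝ, cexp (∑ i, y i * z i) * f (Q y)) *
        (∫ t : ℝ, cexp (t * ∑ i, z i) * g t)
      = (∫ y : Fin n → ℝ, cexp (∑ i, y i * z i) * g (Q y)) *
        (∫ t : ℝ, cexp (t * ∑ i, z i) * f t) := by
  have hmp := auxT_mp n Q hQ hl
  let e : (Fin n → ℝ) × ℝ ≃ᵐ (Fin n → ℝ) × ℝ :=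
    { toFun := auxT n Q
      invFun := auxT n Q
      left_inv := auxT_invol n Q hl
      right_inv := auxT_invol n Q hl
      measurable_toFun := hmp.measurable
      measurable_invFun := hmp.measurable }
  rw [← integral_prod_mul, ← integral_prod_mul]
  have := MeasurePreserving.integral_comp' (f := e) hmp
    (fun w : (Fin n → ℝ) × ℝ => (cexp (∑ i, w.1 i * z i) * f (Q w.1)) *
      (cexp (w.2 * ∑ i, z i) * g w.2))
  refine Eq.trans this.symm ?_
  congr 1
  funext w
  change (cexp (∑ i, ((auxT n Q w).1 i : ℂ) * z i) * f (Q (auxT n Q w).1)) *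
      (cexp ((auxT n Q w).2 * ∑ i, z i) * g (auxT n Q w).2) = _
  have h1 : cexp (∑ i, ((auxT n Q w).1 i : ℂ) * z i) * cexp ((auxT n Q w).2 * ∑ i, z i)
      = cexp (∑ i, w.1 i * z i) * cexp (w.2 * ∑ i, z i) := by
    rw [← Complex.exp_add, ← Complex.exp_add]
    congr 1
    rw [Finset.mul_sum, Finset.mul_sum, ← Finset.sum_add_distrib, ← Finset.sum_add_distrib]
    refine Finset.sum_congr rfl fun i _ => ?_
    simp only [auxT, Pi.add_apply]
    push_cast
    ring
  have h2 : Q (auxT n Q w).1 = w.2 := by simp [auxT, hl]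
  have h3 : (auxT n Q w).2 = Q w.1 := rfl
  rw [h2]
  rw [h3] at h1 ⊢
  linear_combination (f w.2 * g (Q w.1)) * h1

/-- Formula: for every `x ∈ ℝ^n_+` and `z` with `Re z = c`, writing `s = z₁ + ⋯ + zₙ`,
`Γ(s) ∫_{ℝ^n_+} p^{z-I} h(q(p₁x₁,…,pₙxₙ)) dp
  = x^{-z} (∫_{ℝ^n_+} p^{z-I} e^{-q(p)} dp) (∫_0^∞ t^{s-1} h(t) dt)`. -/
theorem gamma_mul_mellin_h_comp_q_eq
    (n : ℕ) (hn : 2 ≤ n) (q : (Fin n → ℝ) → ℝ) (hq : IsCostFun n q)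
    (c : Fin n → ℝ) (hc : ∀ i, 0 < c i) (α : ℝ) (hα : α = ∑ i, c i)
    (h : ℝ → ℝ) (hh : MemL1w1 α h) :
    ∀ x ∈ posOrth n, ∀ z : Fin n → ℂ, (∀ i, (z i).re = c i) →
      Complex.Gamma (∑ i, z i) *
          ∫ p in posOrth n,
            (∏ i, (p i : ℂ) ^ (z i - 1)) * (h (q (fun i => p i * x i)) : ℂ) =
        (∏ i, (x i : ℂ) ^ (-(z i))) *
          (∫ p in posOrth n, (∏ i, (p i : ℂ) ^ (z i - 1)) * (Real.exp (-(q p)) : ℂ)) *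
          ∫ t in Ioi (0 : ℝ), (t : ℂ) ^ ((∑ i, z i) - 1) * (h t : ℂ) := by
  intro x hx z hz
  obtain ⟨hq1, hq2, hq3, -⟩ := hq
  have hmem : ∀ y : Fin n → ℝ, (fun i => Real.exp (y i)) ∈ posOrth n :=
    fun y i => Real.exp_pos _
  set Q : (Fin n → ℝ) → ℝ := fun y => Real.log (q fun i => Real.exp (y i)) with hQdef
  have hexpQ : ∀ y, q (fun i => Real.exp (y i)) = Real.exp (Q y) := fun y =>
    (Real.exp_log (hq2 _ (hmem y))).symm
  have hQ : Measurable Q := by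
    have hcont : Continuous fun y : Fin n → ℝ => q fun i => Real.exp (y i) :=
      hq1.continuousOn.comp_continuous (by fun_prop) hmem
    exact Real.measurable_log.comp hcont.measurable
  have hl : ∀ y (l : ℝ), Q (y + fun _ => l) = Q y + l := by
    intro y l
    simp only [hQdef]
    have : (fun i => Real.exp ((y + (fun _ => l : Fin n → ℝ)) i)) = fun i => Real.exp l * Real.exp (y i) := by
      funext i
      rw [← Real.exp_add, add_comm]; rfl
    rw [this, hq3 _ (Real.exp_pos l) _ (hmem y),
      Real.log_mul (Real.exp_pos l).ne' (hq2 _ (hmem y)).ne', Real.log_exp, add_comm]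
  have hs : 0 < (∑ i, z i).re := by
    rw [Complex.re_sum]
    refine Finset.sum_pos (fun i _ => by rw [hz]; exact hc i) ?_
    exact ⟨⟨0, by omega⟩, Finset.mem_univ _⟩
  have hG : Complex.Gamma (∑ i, z i) =
      ∫ t : ℝ, cexp (t * ∑ i, z i) * ((Real.exp (-Real.exp t) : ℝ) : ℂ) := by
    rw [Complex.Gamma_eq_integral hs, Complex.GammaIntegral, aux_cov1]
    congr 1
    funext t
    rw [mul_comm, aux_pow1]
  have hI1 : ∫ p in posOrth n,
            (∏ i, (p i : ℂ) ^ (z i - 1)) * (h (q (fun i => p i * x i)) : ℂ)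
      = (∏ i, (x i : ℂ) ^ (-(z i))) *
        ∫ y : Fin n → ℝ, cexp (∑ i, y i * z i) * (h (Real.exp (Q y)) : ℂ) := by
    rw [aux_cov, ← integral_const_mul,
      ← integral_add_right_eq_self _ (fun i => -Real.log (x i))]
    congr 1
    funext y
    rw [aux_pow, ← hexpQ]
    have e1 : (fun i => Real.exp ((y + fun i => -Real.log (x i)) i) * x i)
        = fun i => Real.exp (y i) := by
      funext i
      rw [Pi.add_apply, Real.exp_add, Real.exp_neg, Real.exp_log (hx i), mul_assoc,
        inv_mul_cancel₀ (hx i).ne', mul_one]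
    rw [e1, ← mul_assoc]
    congr 1
    rw [Complex.exp_sum, Complex.exp_sum, ← Finset.prod_mul_distrib]
    refine Finset.prod_congr rfl fun i _ => ?_
    have e2 : (x i : ℂ) ^ (-(z i)) = cexp (Real.log (x i) * (-(z i))) := by
      rw [← aux_cpow, Real.exp_log (hx i)]
    rw [e2, ← Complex.exp_add, Pi.add_apply]
    congr 1
    push_cast
    ring
  have hI2 : ∫ p in posOrth n, (∏ i, (p i : ℂ) ^ (z i - 1)) * (Real.exp (-(q p)) : ℂ)
      = ∫ y : Fin n → ℝ, cexp (∑ i, y i * z i) * ((Real.exp (-Real.exp (Q y)) : ℝ) : ℂ) := by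
    rw [aux_cov]
    congr 1
    funext y
    rw [aux_pow, hexpQ]
  have hI3 : ∫ t in Ioi (0 : ℝ), (t : ℂ) ^ ((∑ i, z i) - 1) * (h t : ℂ)
      = ∫ t : ℝ, cexp (t * ∑ i, z i) * (h (Real.exp t) : ℂ) := by
    rw [aux_cov1]
    congr 1
    funext y
    rw [aux_pow1]
  have key := aux_symm n Q hQ hl z (fun t => (h (Real.exp t) : ℂ))
    (fun t => ((Real.exp (-Real.exp t) : ℝ) : ℂ))
  rw [hG, hI1, hI2, hI3]
  linear_combination (∏ i, (x i : ℂ) ^ (-(z i))) * key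
end
end
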